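/- arXiv:1907.02710 — 4 statements merged into one kernel-verified Lean document; each statement's English description precedes it below -/
import Mathlib

section
/- Let θ = 1, t₀ > 0, γ₁ > 2 and γ₂ ≥ γ₁, and suppose α ≥ (γ₁ + 2)/(γ₁ − 2). Let x : [t₀, ∞) → ℝⁿ be a solution of the perturbed inertial ODE with damping α/t. Assume that ∫_{t₀}^∞ t^{γ₂/(γ₂ − 2)} ‖g(t)‖ dt < ∞ and that F satisfies hypotheses H1(γ₁) and H2(γ₂) and admits a unique minimizer. Then there exist C > 0 and t₁ ≥ t₀ such that for all t ≥ t₁, F(x(t)) − F* ≤ C · t^{−2γ₂/(γ₂ − 2)}. -/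
open MeasureTheory
open scoped RealInnerProductSpace

lemma gron {T D : ℝ} (hT : 0 < T) (hD : 0 ≤ D) (H H' φ : ℝ → ℝ)
    (hH : ∀ t ≥ T, HasDerivAt H (H' t) t)
    (hφ : ContinuousOn φ (Set.Ici T)) (hφ0 : ∀ t ≥ T, 0 ≤ φ t)
    (hφi : IntegrableOn φ (Set.Ici T))
    (hb : ∀ t ≥ T, 0 < H t → H' t ≤ φ t * (H t + D)) :
    ∃ M > 0, ∀ t ≥ T, H t ≤ M := by
  set ψ : ℝ → ℝ := fun t => φ (max T t) with hψ
  have hψc : Continuous ψ := by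
    refine hφ.comp_continuous (by fun_prop) (fun t => ?_)
    simp
  set Φ : ℝ → ℝ := fun t => (∫ s in T..t, ψ s) - Real.exp (-t) with hΦ
  have hΦd : ∀ t, HasDerivAt Φ (ψ t + Real.exp (-t)) t := by
    intro t
    have h1 := (hψc.integral_hasStrictDerivAt T t).hasDerivAt
    have h2 := ((hasDerivAt_id t).neg.exp)
    exact (h1.sub h2).congr_deriv (by rw [Pi.neg_apply]; simp only [id]; ring)
  have hψ0 : ∀ t, 0 ≤ ψ t := fun t => hφ0 _ (le_max_left _ _)
  have hlow : ∀ t ≥ T, -1 ≤ Φ t := by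
    intro t ht
    have h1 : 0 ≤ ∫ s in T..t, ψ s := intervalIntegral.integral_nonneg ht (fun s _ => hψ0 s)
    have h2 : Real.exp (-t) ≤ 1 := Real.exp_le_one_iff.2 (by linarith)
    simp only [hΦ]; linarith
  set I := ∫ s in Set.Ici T, φ s with hI
  have hup : ∀ t ≥ T, Φ t ≤ I := by
    intro t ht
    have h1 : (∫ s in T..t, ψ s) = ∫ s in T..t, φ s := by
      apply intervalIntegral.integral_congr
      intro s hs
      rw [Set.uIcc_of_le ht] at hs
      simp [hψ, max_eq_right hs.1]
    have h2 : (∫ s in T..t, φ s) ≤ I := by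
      rw [intervalIntegral.integral_of_le ht]
      apply setIntegral_mono_set hφi
      · exact (ae_restrict_iff' measurableSet_Ici).2 (Filter.Eventually.of_forall fun s hs => hφ0 s hs)
      · exact (Set.Ioc_subset_Ioi_self.trans Set.Ioi_subset_Ici_self).eventuallyLE
    have h3 := Real.exp_pos (-t)
    simp only [hΦ]; linarith
  set A := (|H T| + D + 1) * Real.exp 1 with hA
  have hA0 : 0 < A := by positivity
  have hBl : ∀ t ≥ T, |H T| + D + 1 ≤ A * Real.exp (Φ t) := by
    intro t ht
    rw [hA, mul_assoc, ← Real.exp_add]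
    have : 1 ≤ Real.exp (1 + Φ t) := Real.one_le_exp (by linarith [hlow t ht])
    have h0 : 0 ≤ |H T| + D + 1 := by positivity
    nlinarith
  refine ⟨A * Real.exp I, by positivity, fun t ht => ?_⟩
  have key : H t ≤ A * Real.exp (Φ t) - D := by
    refine image_le_of_deriv_right_lt_deriv_boundary (f := H) (f' := H') (a := T) (b := t)
      (B := fun t => A * Real.exp (Φ t) - D)
      (B' := fun t => A * (Real.exp (Φ t) * (ψ t + Real.exp (-t)))) ?_ ?_ ?_ ?_ ?_ ⟨ht, le_rfl⟩
    · exact fun s hs => (hH s hs.1).continuousAt.continuousWithinAt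
    · exact fun s hs => (hH s hs.1).hasDerivWithinAt
    · have := hBl T le_rfl
      have := le_abs_self (H T)
      linarith
    · exact fun s => (((hΦd s).exp).const_mul A).sub_const D
    · intro s hs he
      have h1 := hBl s hs.1
      have h2 := abs_nonneg (H T)
      have h3 := hb s hs.1 (by linarith)
      have h4 : ψ s = φ s := by simp [hψ, max_eq_right hs.1]
      have h5 : H s + D = A * Real.exp (Φ s) := by rw [he]; ring
      rw [h5] at h3
      simp only [h4]
      have h6 : 0 < A * Real.exp (Φ s) * Real.exp (-s) := by positivity
      nlinarith
  have h1 : Real.exp (Φ t) ≤ Real.exp I := Real.exp_le_exp.2 (hup t ht)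
  nlinarith

lemma conv_grad {E : Type*} [NormedAddCommGroup E] [InnerProductSpace ℝ E] [CompleteSpace E]
    (F : E → ℝ) (hc : ConvexOn ℝ Set.univ F) (hd : Differentiable ℝ F) (y z : E) :
    F y - F z ≤ ⟪gradient F y, y - z⟫ := by
  have h1 : ConvexOn ℝ Set.univ (fun s : ℝ => F (AffineMap.lineMap y z s)) := by
    have := hc.comp_affineMap (AffineMap.lineMap (k := ℝ) y z)
    exact this
  have h2 : HasDerivAt (fun s : ℝ => F (AffineMap.lineMap y z s)) ⟪gradient F y, z - y⟫ 0 := by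
    have ha : HasFDerivAt F ((InnerProductSpace.toDual ℝ E) (gradient F y)) (AffineMap.lineMap y z (0:ℝ)) := by
      simpa using (hd y).hasGradientAt.hasFDerivAt
    have hb : HasDerivAt (fun s : ℝ => (AffineMap.lineMap y z s : E)) (z - y) 0 :=
      AffineMap.hasDerivAt_lineMap
    have := ha.comp_hasDerivAt (0:ℝ) hb
    rw [InnerProductSpace.toDual_apply_apply] at this
    exact this
  have h3 := h1.le_slope_of_hasDerivAt (Set.mem_univ 0) (Set.mem_univ 1) (by norm_num) h2
  simp only [slope, sub_zero, inv_one, one_smul, AffineMap.lineMap_apply_one, AffineMap.lineMap_apply_zero, vsub_eq_sub] at h3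
  have h4 : ⟪gradient F y, z - y⟫ = - ⟪gradient F y, y - z⟫ := by
    rw [← inner_neg_right]; simp
  linarith

lemma coerc {E : Type*} [NormedAddCommGroup E] [InnerProductSpace ℝ E]
    (F : E → ℝ) (hc : ConvexOn ℝ Set.univ F) (z : E) (K ε q : ℝ)
    (hK : ∀ y, ‖y - z‖ < ε → K * ‖y - z‖ ^ q ≤ F y - F z)
    (ρ : ℝ) (h0 : 0 < ρ) (h1 : ρ < ε) (y : E) (hy : ρ ≤ ‖y - z‖) :
    K * ρ ^ q * ‖y - z‖ ≤ ρ * (F y - F z) := by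
  have hp : 0 < ‖y - z‖ := h0.trans_le hy
  set s := ρ / ‖y - z‖ with hs
  have hs0 : 0 < s := by positivity
  have hs1 : s ≤ 1 := (div_le_one hp).2 hy
  have h2 := hc.2 (Set.mem_univ y) (Set.mem_univ z) hs0.le (sub_nonneg.2 hs1) (by ring)
  have h3 : s • y + (1 - s) • z - z = s • (y - z) := by module
  have h4 : ‖s • y + (1 - s) • z - z‖ = ρ := by
    rw [h3, norm_smul, Real.norm_of_nonneg hs0.le, hs]; field_simp
  have h5 := hK (s • y + (1 - s) • z) (by rw [h4]; exact h1)
  rw [h4] at h5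
  simp only [smul_eq_mul] at h2
  have h6 : K * ρ ^ q ≤ s * (F y - F z) := by linarith
  have h7 : s * ‖y - z‖ = ρ := by rw [hs]; field_simp
  calc K * ρ ^ q * ‖y - z‖ ≤ s * (F y - F z) * ‖y - z‖ := by gcongr
    _ = ρ * (F y - F z) := by rw [← h7]; ring

lemma young (a K q : ℝ) (hK : 0 < K) (ha : 0 ≤ a) (hq : 1 < q) :
    ∃ C ≥ 0, ∀ w ≥ 0, a * w ≤ 1 / 2 * (K * w ^ q) + C := by
  have h := (tendsto_rpow_atTop (show 0 < q - 1 by linarith)).eventually_ge_atTop (2 * a / K)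
  obtain ⟨w0, hw0⟩ := Filter.eventually_atTop.1 h
  refine ⟨a * max w0 1, by positivity, fun w hw => ?_⟩
  rcases le_total w (max w0 1) with h1 | h1
  · have : 0 ≤ 1 / 2 * (K * w ^ q) := by positivity
    nlinarith
  · have hw1 : 0 < w := by have := le_max_right w0 1; linarith
    have h2 := hw0 w ((le_max_left _ _).trans h1)
    rw [div_le_iff₀ hK] at h2
    have h3 : w ^ q = w ^ (q - 1) * w := by
      rw [← Real.rpow_add_one hw1.ne']; congr 1; ring
    rw [h3]
    have : 0 ≤ a * max w0 1 := by positivity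
    nlinarith

section traj
variable {E : Type*} [NormedAddCommGroup E] [InnerProductSpace ℝ E]

lemma stage1 (v v' G g : ℝ → E) (W : ℝ → ℝ) (α T : ℝ) (hT : 0 < T) (hα : 0 ≤ α)
    (hv : ∀ t ≥ T, HasDerivAt v (v' t) t)
    (hW : ∀ t ≥ T, HasDerivAt W ⟪G t, v t⟫ t)
    (hW0 : ∀ t ≥ T, 0 ≤ W t)
    (hode : ∀ t ≥ T, v' t = g t - (α / t) • v t - G t)
    (hg : ContinuousOn g (Set.Ici T))
    (hi : IntegrableOn (fun t => ‖g t‖) (Set.Ici T)) :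
    ∃ M > 0, ∀ t ≥ T, 1 / 2 * ‖v t‖ ^ 2 + W t ≤ M := by
  refine gron hT (D := 1) zero_le_one (fun t => 1 / 2 * ‖v t‖ ^ 2 + W t) _ (fun t => ‖g t‖)
    (fun t ht => ((hv t ht).norm_sq.const_mul (1 / 2)).add (hW t ht)) hg.norm
    (fun t _ => norm_nonneg _) hi ?_
  intro t ht _
  have ht0 : 0 < t := hT.trans_le ht
  rw [hode t ht, inner_sub_right, inner_sub_right, inner_smul_right, real_inner_self_eq_norm_sq,
    real_inner_comm (v t) (G t)]
  have h1 : ⟪v t, g t⟫ ≤ ‖v t‖ * ‖g t‖ := real_inner_le_norm _ _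
  have h2 : 0 ≤ α / t * ‖v t‖ ^ 2 := by positivity
  have h3 : ‖v t‖ ≤ 1 / 2 * ‖v t‖ ^ 2 + W t + 1 := by nlinarith [hW0 t ht, sq_nonneg (‖v t‖ - 1)]
  have h4 : ‖g t‖ * ‖v t‖ ≤ ‖g t‖ * (1 / 2 * ‖v t‖ ^ 2 + W t + 1) := by gcongr
  linarith

lemma stage2 (u v v' G g : ℝ → E) (W : ℝ → ℝ) (α T R : ℝ) (hT : 1 ≤ T) (hα : 1 ≤ α) (hR : 0 ≤ R)
    (hu : ∀ t ≥ T, HasDerivAt u (v t) t)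
    (hv : ∀ t ≥ T, HasDerivAt v (v' t) t)
    (hW : ∀ t ≥ T, HasDerivAt W ⟪G t, v t⟫ t)
    (hWG : ∀ t ≥ T, W t ≤ ⟪G t, u t⟫)
    (hode : ∀ t ≥ T, v' t = g t - (α / t) • v t - G t)
    (huR : ∀ t ≥ T, ‖u t‖ ≤ R) (hvR : ∀ t ≥ T, ‖v t‖ ≤ R)
    (hg : ContinuousOn g (Set.Ici T))
    (hi : IntegrableOn (fun t => t ^ (1 / 2 : ℝ) * ‖g t‖) (Set.Ici T)) :
    ∃ C > 0, ∀ t ≥ T, t ^ (1 / 2 : ℝ) * W t ≤ C := by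
  have hT0 : 0 < T := by linarith
  have key0 : ∃ M > 0, ∀ t ≥ T, t ^ (1 / 2 : ℝ) * (1 / 2 * ‖v t‖ ^ 2 + W t + 1 / 2 * (⟪u t, v t⟫ * t⁻¹)) ≤ M := by
    refine gron hT0 (D := 1) zero_le_one
      (fun t => t ^ (1 / 2 : ℝ) * (1 / 2 * ‖v t‖ ^ 2 + W t + 1 / 2 * (⟪u t, v t⟫ * t⁻¹))) _
      (fun t => 2 * R * (t ^ (1 / 2 : ℝ) * ‖g t‖) + R ^ 2 * (α / 2 + 1) * t ^ (-3 / 2 : ℝ))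
      (fun t ht => (Real.hasDerivAt_rpow_const (p := 1 / 2) (Or.inl (by linarith : t ≠ 0))).mul
        ((((hv t ht).norm_sq.const_mul (1 / 2)).add (hW t ht)).add
          ((((hu t ht).inner ℝ (hv t ht)).mul (hasDerivAt_inv (by linarith : t ≠ 0))).const_mul (1 / 2))))
      ?_ ?_ ?_ ?_
    · refine ContinuousOn.add (ContinuousOn.mul continuousOn_const (ContinuousOn.mul ?_ hg.norm))
        (ContinuousOn.mul continuousOn_const ?_)
      · exact fun t ht => (Real.continuousAt_rpow_const t _ (Or.inl (by have := Set.mem_Ici.1 ht; linarith))).continuousWithinAt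
      · exact fun t ht => (Real.continuousAt_rpow_const t _ (Or.inl (by have := Set.mem_Ici.1 ht; linarith))).continuousWithinAt
    · intro t ht
      have ht1 : 0 < t := by linarith
      positivity
    · refine (hi.const_mul _).add (Integrable.const_mul ?_ _)
      have := (integrableOn_Ioi_rpow_of_lt (show (-3 / 2 : ℝ) < -1 by norm_num) hT0)
      exact (integrableOn_Ici_iff_integrableOn_Ioi).2 this
    · intro t ht hpos
      have ht1 : 1 ≤ t := hT.trans ht
      have ht0 : 0 < t := by linarith
      have hs1 : t ^ (-3 / 2 : ℝ) = t ^ (1 / 2 : ℝ) * (t⁻¹ * t⁻¹) := by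
        rw [show (-3 / 2 : ℝ) = 1 / 2 - 1 - 1 by norm_num, Real.rpow_sub_one ht0.ne', Real.rpow_sub_one ht0.ne']
        ring
      have hs2 : t ^ (1 / 2 - 1 : ℝ) = t ^ (1 / 2 : ℝ) * t⁻¹ := by
        rw [Real.rpow_sub_one ht0.ne']; ring
      set w := t ^ (1 / 2 : ℝ) with hw
      have hw0 : 0 < w := by positivity
      refine le_trans ?_ (le_mul_of_one_le_right (a := (2 * R * (w * ‖g t‖) + R ^ 2 * (α / 2 + 1) * t ^ (-3 / 2 : ℝ))) (by positivity) (by linarith))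
      rw [hs1, hs2, hode t ht]
      simp only [inner_sub_right, inner_smul_right]
      have e1 : ⟪v t, v t⟫ = ‖v t‖ ^ 2 := real_inner_self_eq_norm_sq _
      have e2 : ⟪v t, G t⟫ = ⟪G t, v t⟫ := real_inner_comm _ _
      have e3 : ⟪u t, G t⟫ = ⟪G t, u t⟫ := real_inner_comm _ _
      rw [e1, e2, e3]
      have h0 := hWG t ht
      have b1 : ⟪v t, g t⟫ ≤ R * ‖g t‖ := (real_inner_le_norm _ _).trans (by gcongr; exact hvR t ht)
      have b2 : ⟪u t, g t⟫ ≤ R * ‖g t‖ := (real_inner_le_norm _ _).trans (by gcongr; exact huR t ht)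
      have b3 : -(R * R) ≤ ⟪u t, v t⟫ := by
        have := neg_le_of_abs_le (abs_real_inner_le_norm (u t) (v t))
        have : ‖u t‖ * ‖v t‖ ≤ R * R := mul_le_mul (huR t ht) (hvR t ht) (norm_nonneg _) hR
        linarith
      have hd : -(t ^ 2)⁻¹ = - (t⁻¹ * t⁻¹) := by rw [← mul_inv]; congr 2; ring
      rw [hd]
      have hda : α / t = α * t⁻¹ := div_eq_mul_inv _ _
      rw [hda]
      have hi1 : t⁻¹ ≤ 1 := inv_le_one_of_one_le₀ ht1
      have hi0 : 0 < t⁻¹ := by positivity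
      set s := t⁻¹ with hs
      set b := ⟪u t, v t⟫
      set c := ‖v t‖ ^ 2 with hc
      have hc0 : 0 ≤ c := by positivity
      set d := ⟪G t, u t⟫
      set e := ⟪G t, v t⟫
      set p := ⟪v t, g t⟫
      set q := ⟪u t, g t⟫
      have hgn : 0 ≤ R * ‖g t‖ := by positivity
      have k1 : s * q ≤ R * ‖g t‖ := by nlinarith
      have k2 : 0 ≤ s * (d - W t) := mul_nonneg hi0.le (by linarith)
      have k3 : 0 ≤ s * c * (α - 3 / 4) := by
        apply mul_nonneg (by positivity); linarith
      have k4 : 0 ≤ s * s * (b + R * R) := mul_nonneg (by positivity) (by linarith)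
      have k5 : 0 ≤ (α / 2 + 1 / 4) * (s * s * (b + R * R)) := mul_nonneg (by linarith) k4
      have k6 : 0 ≤ s * s * (R * R) := by positivity
      have key : (1 / 2 * s * (1 / 2 * c + W t + 1 / 2 * (b * s)) + (p - α * s * c - e + e + 1 / 2 * ((q - α * s * b - d + c) * s + b * (-(s * s))))) ≤ 2 * (R * ‖g t‖) + R ^ 2 * (α / 2 + 1) * (s * s) := by
        linarith
      have := mul_le_mul_of_nonneg_left key hw0.le
      linarith
  obtain ⟨M, hM, hb⟩ := key0
  refine ⟨M + R ^ 2, by positivity, fun t ht => ?_⟩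
  have ht1 : 1 ≤ t := hT.trans ht
  have h1 := hb t ht
  have h2 : -(R * R) ≤ ⟪u t, v t⟫ := by
    have := neg_le_of_abs_le (abs_real_inner_le_norm (u t) (v t))
    have : ‖u t‖ * ‖v t‖ ≤ R * R := mul_le_mul (huR t ht) (hvR t ht) (norm_nonneg _) hR
    linarith
  have h3 : t ^ (1 / 2 : ℝ) * t⁻¹ ≤ 1 := by
    rw [← div_eq_mul_inv, ← Real.rpow_sub_one (by linarith)]
    exact Real.rpow_le_one_of_one_le_of_nonpos ht1 (by norm_num)
  have h4 : 0 ≤ t ^ (1 / 2 : ℝ) * t⁻¹ := by positivity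
  have h5 : 0 ≤ t ^ (1 / 2 : ℝ) * (1 / 2 * ‖v t‖ ^ 2) := by positivity
  have h6 : -(R * R) ≤ (t ^ (1 / 2 : ℝ) * t⁻¹) * ⟪u t, v t⟫ := by nlinarith [mul_nonneg hR hR]
  nlinarith

lemma stage3 (u v v' G g : ℝ → E) (W : ℝ → ℝ) (α T γ₁ γ₂ K : ℝ) (hT : 1 ≤ T)
    (hγ₁ : 2 < γ₁) (hγ₁₂ : γ₁ ≤ γ₂) (hα : (γ₁ + 2) / (γ₁ - 2) ≤ α) (hK : 0 < K)
    (hu : ∀ t ≥ T, HasDerivAt u (v t) t)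
    (hv : ∀ t ≥ T, HasDerivAt v (v' t) t)
    (hW : ∀ t ≥ T, HasDerivAt W ⟪G t, v t⟫ t)
    (hode : ∀ t ≥ T, v' t = g t - (α / t) • v t - G t)
    (h1 : ∀ t ≥ T, W t ≤ (1 / γ₁) * ⟪G t, u t⟫)
    (h2 : ∀ t ≥ T, K * ‖u t‖ ^ γ₂ ≤ W t)
    (hg : ContinuousOn g (Set.Ici T))
    (hi : IntegrableOn (fun t => t ^ (γ₂ / (γ₂ - 2)) * ‖g t‖) (Set.Ici T)) :
    ∃ C > 0, ∀ t ≥ T, t ^ (2 * γ₂ / (γ₂ - 2)) * W t ≤ C := by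
  have hT0 : 0 < T := by linarith
  have hγ₂ : 2 < γ₂ := by linarith
  obtain ⟨l, hl⟩ : ∃ l, l = 2 / (γ₁ - 2) := ⟨_, rfl⟩
  obtain ⟨p, hp⟩ : ∃ p, p = 4 / (γ₂ - 2) := ⟨_, rfl⟩
  have hg1 : 0 < γ₁ - 2 := by linarith
  have hg2 : 0 < γ₂ - 2 := by linarith
  have hl0 : 0 < l := by rw [hl]; positivity
  have hp0 : 0 < p := by rw [hp]; positivity
  have hlg : l * γ₁ = 2 + 2 * l := by rw [hl]; field_simp; ring
  have hla : 2 * l + 1 ≤ α := by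
    refine le_trans (le_of_eq ?_) hα
    rw [hl]; field_simp; ring
  have hpl : p ≤ 2 * l := by
    rw [hp, hl, ← mul_div_assoc, div_le_div_iff₀ hg2 hg1]; nlinarith
  have hpe : 2 * γ₂ / (γ₂ - 2) = p + 2 := by rw [hp]; field_simp; ring
  have hpe2 : γ₂ / (γ₂ - 2) = p / 2 + 1 := by rw [hp]; field_simp; ring
  have hpe3 : p * (γ₂ / 2) = p + 2 := by rw [hp]; field_simp; ring
  rw [hpe2] at hi
  rw [hpe]
  obtain ⟨ξ, hξ⟩ : ∃ ξ, ξ = l * (l + 1 - α) := ⟨_, rfl⟩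
  have hξ0 : ξ ≤ 0 := by rw [hξ]; exact mul_nonpos_of_nonneg_of_nonpos hl0.le (by linarith)
  obtain ⟨C, hC0, hC⟩ := young (-ξ / 2) K (γ₂ / 2) hK (by linarith) (by linarith)
  have hlow : ∀ t ≥ T, -ξ / 2 * (t ^ p * ‖u t‖ ^ 2) ≤ 1 / 2 * (t ^ p * (t ^ 2 * W t)) + C := by
    intro t ht
    have ht0 : 0 < t := by linarith
    refine (hC (t ^ p * ‖u t‖ ^ 2) (by positivity)).trans ?_
    have e1 : (t ^ p * ‖u t‖ ^ 2) ^ (γ₂ / 2) = t ^ p * t ^ 2 * ‖u t‖ ^ γ₂ := by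
      rw [Real.mul_rpow (by positivity) (by positivity), ← Real.rpow_mul ht0.le, hpe3,
        Real.rpow_add ht0, Real.rpow_two]
      congr 1
      rw [← Real.rpow_two, ← Real.rpow_mul (norm_nonneg _)]
      congr 1; ring
    rw [e1]
    have := mul_le_mul_of_nonneg_left (h2 t ht) (show 0 ≤ t ^ p * t ^ 2 by positivity)
    linarith
  have key0 : ∃ M > 0, ∀ t ≥ T, t ^ p * (t ^ 2 * W t + 1 / 2 * ‖l • u t + t • v t‖ ^ 2 + ξ / 2 * ‖u t‖ ^ 2) ≤ M := by
    refine gron hT0 (D := C + 1) (by linarith)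
      (fun t => t ^ p * (t ^ 2 * W t + 1 / 2 * ‖l • u t + t • v t‖ ^ 2 + ξ / 2 * ‖u t‖ ^ 2)) _
      (fun t => t ^ (p / 2 + 1) * ‖g t‖)
      (fun t ht => (Real.hasDerivAt_rpow_const (p := p) (Or.inl (by linarith : t ≠ 0))).mul
        ((((hasDerivAt_pow 2 t).mul (hW t ht)).add
          ((((hu t ht).const_smul l).add ((hasDerivAt_id t).smul (hv t ht))).norm_sq.const_mul (1 / 2))).add
          ((hu t ht).norm_sq.const_mul (ξ / 2))))
      ?_ ?_ hi ?_
    · refine ContinuousOn.mul ?_ hg.norm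
      exact fun t ht => (Real.continuousAt_rpow_const t _ (Or.inl (by have := Set.mem_Ici.1 ht; linarith))).continuousWithinAt
    · intro t ht
      have ht1 : 0 < t := by linarith
      positivity
    · intro t ht hpos
      have ht0 : 0 < t := by linarith
      have a2 := hlow t ht
      have hq : t ^ (p - 1) = t ^ p * t⁻¹ := by rw [Real.rpow_sub_one ht0.ne']; ring
      have hr : t ^ p = t ^ (p / 2) * t ^ (p / 2) := by rw [← Real.rpow_add ht0]; congr 1; ring
      have hr1 : t ^ (p / 2 + 1) = t ^ (p / 2) * t := Real.rpow_add_one ht0.ne' _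
      have htp : 0 < t ^ p := by positivity
      have hE : 0 < t ^ 2 * W t + 1 / 2 * ‖l • u t + t • v t‖ ^ 2 + ξ / 2 * ‖u t‖ ^ 2 :=
        (mul_pos_iff_of_pos_left htp).1 hpos
      have hgw : ⟪g t, l • u t + t • v t⟫ ≤ ‖g t‖ * ‖l • u t + t • v t‖ := real_inner_le_norm _ _
      obtain ⟨y, hy⟩ : ∃ y, y = l • u t + t • v t := ⟨_, rfl⟩
      have main : t * (2 * t * W t + t ^ 2 * ⟪G t, v t⟫ +
          1 / 2 * (2 * ⟪l • u t + t • v t, l • v t + (t • v' t + v t)⟫) + ξ / 2 * (2 * ⟪u t, v t⟫))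
          + 2 * l * (t ^ 2 * W t + 1 / 2 * ‖l • u t + t • v t‖ ^ 2 + ξ / 2 * ‖u t‖ ^ 2)
          ≤ t ^ 2 * ⟪g t, l • u t + t • v t⟫ := by
        have hvv : t • v' t = t • g t - α • v t - t • G t := by
          rw [hode t ht, smul_sub, smul_sub, smul_smul, mul_div_cancel₀ _ ht0.ne']
        have hw2 : ‖l • u t + t • v t‖ ^ 2 = l ^ 2 * ‖u t‖ ^ 2 + 2 * l * t * ⟪u t, v t⟫ + t ^ 2 * ‖v t‖ ^ 2 := by
          rw [← real_inner_self_eq_norm_sq, ← real_inner_self_eq_norm_sq, ← real_inner_self_eq_norm_sq]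
          simp only [inner_add_left, inner_add_right, inner_smul_left, inner_smul_right]
          rw [real_inner_comm (u t) (v t)]
          simp only [conj_trivial]
          ring
        have hyy : 0 ≤ ‖l • u t + t • v t‖ ^ 2 := by positivity
        rw [hw2] at hyy ⊢
        rw [hvv]
        simp only [inner_add_left, inner_add_right, inner_sub_right, inner_smul_left, inner_smul_right, conj_trivial]
        rw [real_inner_comm (G t) (u t), real_inner_comm (G t) (v t),
          real_inner_comm (g t) (u t), real_inner_comm (g t) (v t),
          real_inner_self_eq_norm_sq]
        have hd : γ₁ * W t ≤ ⟪G t, u t⟫ := by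
          have := h1 t ht
          rw [one_div, ← div_eq_inv_mul, le_div_iff₀ (by linarith)] at this
          linarith
        have k1 : 0 ≤ l * t ^ 2 * (⟪G t, u t⟫ - γ₁ * W t) := mul_nonneg (by positivity) (by linarith)
        have k2 : l * γ₁ * (t ^ 2 * W t) = (2 + 2 * l) * (t ^ 2 * W t) := by rw [hlg]
        have k3 := mul_nonneg (show 0 ≤ α - 1 - 2 * l by linarith) hyy
        rw [hξ]
        linarith
      have hgoal : p * t ^ (p - 1) * (t ^ 2 * W t + 1 / 2 * ‖l • u t + t • v t‖ ^ 2 + ξ / 2 * ‖u t‖ ^ 2) +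
        t ^ p * (2 * t * W t + t ^ 2 * ⟪G t, v t⟫ +
          1 / 2 * (2 * ⟪l • u t + t • v t, l • v t + (t • v' t + v t)⟫) + ξ / 2 * (2 * ⟪u t, v t⟫))
          ≤ t ^ (p / 2 + 1) * ‖g t‖ * (t ^ p * (t ^ 2 * W t + 1 / 2 * ‖l • u t + t • v t‖ ^ 2 + ξ / 2 * ‖u t‖ ^ 2) + (C + 1)) := by
        rw [← hy] at main hE hgw ⊢
        set A := t ^ 2 * W t + 1 / 2 * ‖y‖ ^ 2 + ξ / 2 * ‖u t‖ ^ 2 with hA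
        set B := 2 * t * W t + t ^ 2 * ⟪G t, v t⟫ +
          1 / 2 * (2 * ⟪y, l • v t + (t • v' t + v t)⟫) + ξ / 2 * (2 * ⟪u t, v t⟫) with hB
        have hW0 : 0 ≤ W t := le_trans (by positivity) (h2 t ht)
        have c1 : t * B + p * A ≤ t ^ 2 * (‖g t‖ * ‖y‖) := by
          have : t ^ 2 * ⟪g t, y⟫ ≤ t ^ 2 * (‖g t‖ * ‖y‖) := by gcongr
          have h9 := mul_nonneg (sub_nonneg.2 hpl) hE.le
          linarith
        have c2 : p * t ^ (p - 1) * A + t ^ p * B = t ^ p * t⁻¹ * (t * B + p * A) := by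
          rw [hq]; field_simp; ring
        rw [c2]
        have c3 : t ^ p * t⁻¹ * (t * B + p * A) ≤ t ^ p * t⁻¹ * (t ^ 2 * (‖g t‖ * ‖y‖)) := by gcongr
        refine c3.trans ?_
        have c4 : t ^ p * t⁻¹ * (t ^ 2 * (‖g t‖ * ‖y‖)) = (t ^ (p / 2 + 1) * ‖g t‖) * (t ^ (p / 2) * ‖y‖) := by
          rw [hr1, hr]; field_simp
        rw [c4]
        apply mul_le_mul_of_nonneg_left _ (by positivity)
        have c5 : t ^ (p / 2) * ‖y‖ ≤ 1 / 2 * (t ^ p * ‖y‖ ^ 2) + 1 := by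
          rw [hr]
          linarith [sq_nonneg (t ^ (p / 2) * ‖y‖ - 1)]
        have c6 : 0 ≤ t ^ p * (t ^ 2 * W t) := by positivity
        rw [hA]
        linarith
      convert hgoal using 2
      simp
  obtain ⟨M, hM, hb⟩ := key0
  refine ⟨2 * (M + C), by positivity, fun t ht => ?_⟩
  have ht0 : 0 < t := by linarith
  have a1 := hb t ht
  have a2 := hlow t ht
  have a3 : 0 ≤ t ^ p * (1 / 2 * ‖l • u t + t • v t‖ ^ 2) := by positivity
  rw [Real.rpow_add ht0, Real.rpow_two]
  nlinarith

end traj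

lemma mono_int {E : Type*} [NormedAddCommGroup E] (g : ℝ → E) (T r q : ℝ) (hT : 1 ≤ T) (hrq : r ≤ q)
    (hg : ContinuousOn g (Set.Ici T))
    (hi : IntegrableOn (fun t => t ^ q * ‖g t‖) (Set.Ici T)) :
    IntegrableOn (fun t => t ^ r * ‖g t‖) (Set.Ici T) := by
  refine Integrable.mono' hi ?_ ?_
  · refine ContinuousOn.aestronglyMeasurable (ContinuousOn.mul ?_ hg.norm) measurableSet_Ici
    exact fun t ht => (Real.continuousAt_rpow_const t _ (Or.inl (by have := Set.mem_Ici.1 ht; linarith))).continuousWithinAt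
  · refine (ae_restrict_iff' measurableSet_Ici).2 (Filter.Eventually.of_forall fun t ht => ?_)
    have ht1 : 1 ≤ t := hT.trans ht
    have : 0 ≤ t ^ r * ‖g t‖ := by positivity
    rw [Real.norm_of_nonneg this]
    gcongr

theorem stmt_8
    {n : ℕ} (hn : 1 ≤ n)
    (F : EuclideanSpace ℝ (Fin n) → ℝ) (Fstar : ℝ)
    (Xstar : Set (EuclideanSpace ℝ (Fin n)))
    (hXstar : Xstar = {z | ∀ y, F z ≤ F y})
    (hne : Xstar.Nonempty)
    (hFstar : ∀ z ∈ Xstar, F z = Fstar)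
    (hconv : ConvexOn ℝ Set.univ F)
    (hdiff : Differentiable ℝ F)
    (α t₀ γ₁ γ₂ : ℝ) (ht₀ : 0 < t₀) (hγ₁ : 2 < γ₁) (hγ₁₂ : γ₁ ≤ γ₂)
    (hαge : (γ₁ + 2) / (γ₁ - 2) ≤ α)
    (g x x' x'' : ℝ → EuclideanSpace ℝ (Fin n))
    (hg : ContinuousOn g (Set.Ici t₀))
    (hx : ∀ t ∈ Set.Ici t₀, HasDerivAt x (x' t) t)
    (hx'd : ∀ t ∈ Set.Ici t₀, HasDerivAt x' (x'' t) t)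
    (hx''c : ContinuousOn x'' (Set.Ici t₀))
    (hode : ∀ t ∈ Set.Ici t₀, x'' t + (α / t) • x' t + gradient F (x t) = g t)
    (hH1 : ∀ z ∈ Xstar, ∃ η > 0, ∀ y : EuclideanSpace ℝ (Fin n),
      ‖y - z‖ < η → F y - Fstar ≤ (1 / γ₁) * ⟪gradient F y, y - z⟫)
    (hH2 : ∀ z ∈ Xstar, ∃ K > 0, ∃ ε > 0, ∀ y : EuclideanSpace ℝ (Fin n),
      ‖y - z‖ < ε → K * Metric.infDist y Xstar ^ (γ₂ : ℝ) ≤ F y - Fstar)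
    (huniq : ∃ z, Xstar = {z})
    (hint : IntegrableOn (fun t : ℝ => t ^ (γ₂ / (γ₂ - 2)) * ‖g t‖) (Set.Ici t₀)) :
    ∃ C > 0, ∃ t₁ ≥ t₀, ∀ t ≥ t₁,
      F (x t) - Fstar ≤ C * t ^ (-(2 * γ₂ / (γ₂ - 2))) := by
  obtain ⟨z, hz⟩ := huniq
  have hzX : z ∈ Xstar := by rw [hz]; rfl
  have hFz : F z = Fstar := hFstar z hzX
  have hmin : ∀ y, F z ≤ F y := by
    have := hzX
    rw [hXstar] at this
    exact this
  obtain ⟨η, hη, hH1⟩ := hH1 z hzX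
  obtain ⟨K, hK, ε, hε, hH2⟩ := hH2 z hzX
  simp only [hz, Metric.infDist_singleton, dist_eq_norm] at hH2
  rw [← hFz] at hH1 hH2 ⊢
  have hγ₂ : 2 < γ₂ := by linarith
  have hg2 : 0 < γ₂ - 2 := by linarith
  have hg1 : 0 < γ₁ - 2 := by linarith
  have hq1 : 1 ≤ γ₂ / (γ₂ - 2) := by rw [le_div_iff₀ hg2]; linarith
  have hα1 : 1 ≤ α := le_trans (by rw [le_div_iff₀ hg1]; linarith) hαge
  have hu : ∀ t ≥ t₀, HasDerivAt (fun t => x t - z) (x' t) t := fun t ht => (hx t ht).sub_const z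
  have hW : ∀ t ≥ t₀, HasDerivAt (fun t => F (x t) - F z) ⟪gradient F (x t), x' t⟫ t := by
    intro t ht
    have h1 := (hdiff (x t)).hasGradientAt.hasFDerivAt.comp_hasDerivAt t (hx t ht)
    rw [InnerProductSpace.toDual_apply_apply] at h1
    exact h1.sub_const _
  have hode' : ∀ t ≥ t₀, x'' t = g t - (α / t) • x' t - gradient F (x t) := by
    intro t ht
    rw [← hode t ht]; abel
  have hW0 : ∀ t, 0 ≤ F (x t) - F z := fun t => sub_nonneg.2 (hmin _)
  obtain ⟨T, hT⟩ : ∃ T, T = max t₀ 1 := ⟨_, rfl⟩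
  have hTt : t₀ ≤ T := by rw [hT]; exact le_max_left _ _
  have hT1 : 1 ≤ T := by rw [hT]; exact le_max_right _ _
  have hT0 : 0 < T := by linarith
  have hgT : ContinuousOn g (Set.Ici T) := hg.mono (Set.Ici_subset_Ici.2 hTt)
  have hiT := hint.mono_set (Set.Ici_subset_Ici.2 hTt)
  obtain ⟨M, hM, hE⟩ := stage1 x' x'' (fun t => gradient F (x t)) g (fun t => F (x t) - F z) α T hT0
    (by linarith) (fun t ht => hx'd t (hTt.trans ht)) (fun t ht => hW t (hTt.trans ht))
    (fun t _ => hW0 t) (fun t ht => hode' t (hTt.trans ht)) hgT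
    (by simpa using mono_int g T 0 _ hT1 (by linarith) hgT hiT)
  obtain ⟨ρ, hρ⟩ : ∃ ρ, ρ = min η ε / 2 := ⟨_, rfl⟩
  have hmp : 0 < min η ε := lt_min hη hε
  have hρ0 : 0 < ρ := by rw [hρ]; positivity
  have hρη : ρ < η := by have := min_le_left η ε; linarith
  have hρε : ρ < ε := by have := min_le_right η ε; linarith
  have hco := coerc F hconv z K ε γ₂ hH2 ρ hρ0 hρε
  have hKr : 0 < K * ρ ^ γ₂ := by positivity
  obtain ⟨R, hR⟩ : ∃ R, R = ρ + ρ * M / (K * ρ ^ γ₂) + (M + 1) := ⟨_, rfl⟩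
  have hR1 : 0 ≤ ρ * M / (K * ρ ^ γ₂) := by positivity
  have huR : ∀ t ≥ T, ‖x t - z‖ ≤ R := by
    intro t ht
    rcases le_total ρ ‖x t - z‖ with h | h
    · have h1 := hco _ h
      have h2 : ρ * (F (x t) - F z) ≤ ρ * M := by
        have := hE t ht
        have h3 : 0 ≤ 1 / 2 * ‖x' t‖ ^ 2 := by positivity
        exact mul_le_mul_of_nonneg_left (by linarith) hρ0.le
      have h4 : ‖x t - z‖ ≤ ρ * M / (K * ρ ^ γ₂) := by
        rw [le_div_iff₀ hKr]; linarith
      linarith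
    · linarith
  have hvR : ∀ t ≥ T, ‖x' t‖ ≤ R := by
    intro t ht
    have h1 := hE t ht
    have h2 := hW0 t
    have h3 : ‖x' t‖ ≤ M + 1 := by nlinarith [sq_nonneg (‖x' t‖ - 1)]
    linarith
  obtain ⟨C, hC, hC2⟩ := stage2 (fun t => x t - z) x' x'' (fun t => gradient F (x t)) g
    (fun t => F (x t) - F z) α T R hT1 hα1 (by linarith) (fun t ht => hu t (hTt.trans ht))
    (fun t ht => hx'd t (hTt.trans ht)) (fun t ht => hW t (hTt.trans ht))
    (fun t _ => conv_grad F hconv hdiff (x t) z) (fun t ht => hode' t (hTt.trans ht))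
    huR hvR hgT (mono_int g T (1 / 2) _ hT1 (by linarith) hgT hiT)
  have hev := (tendsto_rpow_atTop (show (0 : ℝ) < 1 / 2 by norm_num)).eventually_gt_atTop
    (C * ρ / (K * ρ ^ γ₂ * ρ))
  obtain ⟨S, hS⟩ := Filter.eventually_atTop.1 hev
  obtain ⟨t₁, ht₁⟩ : ∃ t₁, t₁ = max S T := ⟨_, rfl⟩
  have h1S : S ≤ t₁ := by rw [ht₁]; exact le_max_left _ _
  have h1T : T ≤ t₁ := by rw [ht₁]; exact le_max_right _ _
  have h10 : t₀ ≤ t₁ := hTt.trans h1T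
  have hnear : ∀ t ≥ t₁, ‖x t - z‖ < ρ := by
    intro t ht
    by_contra! hcon
    have h1 := hco _ hcon
    have h2 := hC2 t (h1T.trans ht)
    have h3 := hS t (h1S.trans ht)
    rw [div_lt_iff₀ (by positivity)] at h3
    have ht0 : 0 < t := by linarith
    have h4 : K * ρ ^ γ₂ * ρ ≤ ρ * (F (x t) - F z) :=
      (mul_le_mul_of_nonneg_left hcon hKr.le).trans h1
    have h5 := mul_le_mul_of_nonneg_left h4 (show 0 ≤ t ^ (1 / 2 : ℝ) by positivity)
    have h6 := mul_le_mul_of_nonneg_left h2 hρ0.le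
    linarith
  obtain ⟨B, hB, hB2⟩ := stage3 (fun t => x t - z) x' x'' (fun t => gradient F (x t)) g
    (fun t => F (x t) - F z) α t₁ γ₁ γ₂ K (hT1.trans h1T) hγ₁ hγ₁₂ hαge hK
    (fun t ht => hu t (h10.trans ht))
    (fun t ht => hx'd t (h10.trans ht)) (fun t ht => hW t (h10.trans ht))
    (fun t ht => hode' t (h10.trans ht))
    (fun t ht => hH1 _ ((hnear t ht).trans hρη))
    (fun t ht => hH2 _ ((hnear t ht).trans hρε))
    (hg.mono (Set.Ici_subset_Ici.2 h10)) (hint.mono_set (Set.Ici_subset_Ici.2 h10))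
  refine ⟨B, hB, t₁, h10, fun t ht => ?_⟩
  have ht0 : 0 < t := by linarith
  rw [Real.rpow_neg ht0.le, ← div_eq_mul_inv, le_div_iff₀ (by positivity)]
  have := hB2 t ht
  linarith
end

section
/- Let θ ∈ [0,1), α > 0, t₀ > 0, γ₁ > 2 and γ₂ ≥ γ₁, and set r = (1 + θ)/2. Let x : [t₀, ∞) → ℝⁿ be a solution of the perturbed inertial ODE with damping α/t^θ. Assume that ∫_{t₀}^∞ t^{rγ₂/(γ₂ − 2)} ‖g(t)‖ dt < ∞ and that F satisfies hypotheses H1(γ₁) and H2(γ₂) and admits a unique minimizer. Then there exist C > 0 and t₁ ≥ t₀ such that for all t ≥ t₁, F(x(t)) − F* ≤ C · t^{−2rγ₂/(γ₂ − 2)}. -/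
open MeasureTheory
open scoped RealInnerProductSpace

lemma gron_aux (T a q M : ℝ) (hT : 0 < T) (ha : 0 ≤ a) (hq : 0 ≤ q) (P P' h H : ℝ → ℝ)
    (hP : ∀ t ≥ T, HasDerivAt P (P' t) t) (hH : ∀ t ≥ T, HasDerivAt H (h t) t)
    (hH0 : ∀ t ≥ T, 0 ≤ H t) (hHM : ∀ t ≥ T, H t ≤ M)
    (hineq : ∀ t ≥ T, P' t ≤ a / t * (q - P t) + h t * P t) :
    ∃ C, 0 ≤ C ∧ ∀ t ≥ T, P t ≤ C := by
  set Q : ℝ → ℝ := fun t => P t * Real.exp (-H t) with hQ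
  have hQd : ∀ t ≥ T, HasDerivAt Q (P' t * Real.exp (-H t) + P t * (Real.exp (-H t) * (-h t))) t :=
    fun t ht => (hP t ht).mul ((hH t ht).neg.exp)
  set S : ℝ → ℝ := fun t => t ^ a * (Q t - q) with hS
  have hSd : ∀ t ≥ T, HasDerivAt S (a * t ^ (a - 1) * (Q t - q) + t ^ a *
      (P' t * Real.exp (-H t) + P t * (Real.exp (-H t) * (-h t)))) t := by
    intro t ht
    have ht0 : 0 < t := lt_of_lt_of_le hT ht
    exact (Real.hasDerivAt_rpow_const (Or.inl ht0.ne')).mul ((hQd t ht).sub_const q)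
  have hanti : AntitoneOn S (Set.Ici T) := by
    apply antitoneOn_of_deriv_nonpos (convex_Ici T)
    · exact fun t ht => (hSd t ht).continuousAt.continuousWithinAt
    · intro t ht
      rw [interior_Ici] at ht
      exact (hSd t (le_of_lt ht)).differentiableAt.differentiableWithinAt
    · intro t ht
      rw [interior_Ici] at ht
      have ht' : t ≥ T := le_of_lt ht
      have ht0 : 0 < t := lt_of_lt_of_le hT ht'
      rw [(hSd t ht').deriv, Real.rpow_sub_one ht0.ne']
      have he1 : Real.exp (-H t) ≤ 1 := by
        rw [Real.exp_le_one_iff]; linarith [hH0 t ht']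
      have he0 := Real.exp_pos (-H t)
      have key : P' t * Real.exp (-H t) + P t * (Real.exp (-H t) * (-h t)) ≤ a / t * (q - Q t) := by
        have h1 := mul_le_mul_of_nonneg_right (hineq t ht') he0.le
        have h2 : a / t * (q * Real.exp (-H t)) ≤ a / t * q := by
          apply mul_le_mul_of_nonneg_left _ (by positivity)
          nlinarith
        simp only [hQ]
        nlinarith
      have hta : 0 ≤ t ^ a := by positivity
      have := mul_le_mul_of_nonneg_left key hta
      have e : a * (t ^ a / t) * (Q t - q) = - (t ^ a * (a / t * (q - Q t))) := by ring
      rw [e]; linarith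
  refine ⟨(q + |Q T - q|) * Real.exp M, by positivity, fun t ht => ?_⟩
  have ht0 : 0 < t := lt_of_lt_of_le hT ht
  have h1 : S t ≤ S T := hanti (Set.mem_Ici.2 le_rfl) ht ht
  have hQt : Q t ≤ q + |Q T - q| := by
    have h2 : T ^ a ≤ t ^ a := Real.rpow_le_rpow hT.le ht ha
    have h3 : 0 < t ^ a := by positivity
    have h4 : T ^ a * (Q T - q) ≤ t ^ a * |Q T - q| := by
      calc T ^ a * (Q T - q) ≤ T ^ a * |Q T - q| :=
            mul_le_mul_of_nonneg_left (le_abs_self _) (by positivity)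
        _ ≤ _ := mul_le_mul_of_nonneg_right h2 (abs_nonneg _)
    have h5 : t ^ a * (Q t - q) ≤ t ^ a * |Q T - q| := le_trans h1 h4
    linarith [le_of_mul_le_mul_left h5 h3]
  have : P t = Q t * Real.exp (H t) := by
    simp only [hQ]; rw [mul_assoc, ← Real.exp_add]; simp
  rw [this]
  calc Q t * Real.exp (H t) ≤ (q + |Q T - q|) * Real.exp (H t) :=
        mul_le_mul_of_nonneg_right hQt (Real.exp_pos _).le
    _ ≤ _ := mul_le_mul_of_nonneg_left (Real.exp_le_exp.2 (hHM t ht)) (by positivity)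

lemma young_aux (ρ δ : ℝ) (hρ : 0 < ρ) (hρ1 : ρ < 1) (hδ : 0 < δ) :
    ∃ B, 0 ≤ B ∧ ∀ y, 0 ≤ y → y ^ ρ ≤ δ * y + B := by
  refine ⟨δ ^ (-(ρ / (1 - ρ))), by positivity, fun y hy => ?_⟩
  have h1 : 0 < 1 - ρ := by linarith
  have := Real.geom_mean_le_arith_mean2_weighted hρ.le h1.le (p₁ := δ * y)
    (p₂ := δ ^ (-(ρ / (1 - ρ)))) (by positivity) (by positivity) (by ring)
  rw [Real.mul_rpow hδ.le hy, ← Real.rpow_mul hδ.le] at this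
  have e : -(ρ / (1 - ρ)) * (1 - ρ) = -ρ := by field_simp
  rw [e, mul_right_comm, ← Real.rpow_add hδ] at this
  simp only [add_neg_cancel, Real.rpow_zero, one_mul] at this
  have hB : 0 < δ ^ (-(ρ / (1 - ρ))) := by positivity
  nlinarith [mul_nonneg hδ.le hy, mul_nonneg hρ.le hB.le]

lemma chain_aux {E : Type*} [NormedAddCommGroup E] [InnerProductSpace ℝ E] [CompleteSpace E]
    (F : E → ℝ) (hdiff : Differentiable ℝ F) (x : ℝ → E) (v : E) (t : ℝ)
    (hx : HasDerivAt x v t) : HasDerivAt (fun s => F (x s)) ⟪gradient F (x t), v⟫ t :=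
  (hdiff (x t)).hasGradientAt.hasFDerivAt.comp_hasDerivAt t hx

lemma grad_aux {E : Type*} [NormedAddCommGroup E] [InnerProductSpace ℝ E] [CompleteSpace E]
    (F : E → ℝ) (hconv : ConvexOn ℝ Set.univ F) (hdiff : Differentiable ℝ F) (y z : E) :
    F y - F z ≤ ⟪gradient F y, y - z⟫ := by
  have h0 : HasDerivAt (fun s : ℝ => y + s • (z - y)) (z - y) 0 := by
    simpa using ((hasDerivAt_id (0:ℝ)).smul_const (z - y)).const_add y
  have h1 := chain_aux F hdiff _ _ _ h0
  have hc : ConvexOn ℝ Set.univ (fun s : ℝ => F (y + s • (z - y))) := by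
    refine ⟨convex_univ, fun s₁ _ s₂ _ p q hp hq hpq => ?_⟩
    have := hconv.2 (Set.mem_univ (y + s₁ • (z - y))) (Set.mem_univ (y + s₂ • (z - y))) hp hq hpq
    have e : y + (p • s₁ + q • s₂) • (z - y) = p • (y + s₁ • (z - y)) + q • (y + s₂ • (z - y)) := by
      have hq1 : q = 1 - p := by linarith
      rw [hq1]
      simp only [smul_eq_mul]
      module
    simp only []
    rw [e]
    exact this
  have := hc.le_slope_of_hasDerivAt (x := 0) (y := 1) (Set.mem_univ _) (Set.mem_univ _) one_pos h1
  rw [slope_def_field] at this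
  have e : ⟪gradient F y, y - z⟫ = - ⟪gradient F y, z - y⟫ := by
    rw [← inner_neg_right, neg_sub]
  simp only [zero_smul, one_smul, add_zero, sub_zero, div_one, add_sub_cancel] at this
  linarith

lemma growth_aux {E : Type*} [NormedAddCommGroup E] [InnerProductSpace ℝ E]
    (F : E → ℝ) (hconv : ConvexOn ℝ Set.univ F) (z : E) (hmin : ∀ y, F z ≤ F y)
    (γ K ε R : ℝ) (hγ : 2 < γ) (hK : 0 < K) (hε : 0 < ε) (hR : 0 ≤ R)
    (h : ∀ y, ‖y - z‖ < ε → K * ‖y - z‖ ^ γ ≤ F y - F z) :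
    ∃ A, 0 < A ∧ ∀ y, F y - F z ≤ R → ‖y - z‖ ^ 2 ≤ A * (F y - F z) ^ (2 / γ) := by
  have hγ0 : 0 < γ := by linarith
  set κ := K * (ε / 2) ^ γ with hκ
  have hκ0 : 0 < κ := by positivity
  set A1 := (1 / K) ^ (2 / γ) with hA1
  set A2 := (ε / (2 * κ)) ^ 2 * R ^ (2 - 2 / γ) with hA2
  have hA10 : 0 < A1 := by positivity
  have hA20 : 0 ≤ A2 := by positivity
  refine ⟨A1 + A2, by positivity, fun y hy => ?_⟩
  have hw : 0 ≤ F y - F z := by linarith [hmin y]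
  set w := F y - F z with hwdef
  set d := ‖y - z‖ with hd
  have hd0 : 0 ≤ d := norm_nonneg _
  have hwp : 0 ≤ w ^ (2 / γ) := by positivity
  by_cases hlt : d < ε
  · have h1 := h y hlt
    have h2 : d ^ γ ≤ 1 / K * w := by
      rw [one_div, inv_mul_eq_div, le_div_iff₀ hK]; linarith
    have h3 : (d ^ γ) ^ (2 / γ) ≤ (1 / K * w) ^ (2 / γ) :=
      Real.rpow_le_rpow (by positivity) h2 (by positivity)
    rw [← Real.rpow_mul hd0, Real.mul_rpow (by positivity) hw] at h3
    have e : γ * (2 / γ) = 2 := by field_simp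
    rw [e, Real.rpow_two] at h3
    nlinarith [mul_nonneg hA20 hwp]
  · push Not at hlt
    have hdp : 0 < d := lt_of_lt_of_le hε hlt
    set s := ε / (2 * d) with hs
    have hs0 : 0 < s := by positivity
    have hs1 : s ≤ 1 := by rw [hs, div_le_one (by positivity)]; linarith
    have hcv := hconv.2 (Set.mem_univ z) (Set.mem_univ y) (sub_nonneg.2 hs1) hs0.le (by ring)
    have hp : (1 - s) • z + s • y - z = s • (y - z) := by
      rw [smul_sub, sub_smul, one_smul]; abel
    have hn : ‖(1 - s) • z + s • y - z‖ = ε / 2 := by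
      rw [hp, norm_smul, Real.norm_of_nonneg hs0.le, ← hd, hs]; field_simp
    have h1 := h ((1 - s) • z + s • y) (by rw [hn]; linarith)
    rw [hn] at h1
    simp only [smul_eq_mul] at hcv
    have h2 : κ ≤ s * w := by rw [hwdef]; nlinarith
    have h3 : d ≤ ε / (2 * κ) * w := by
      rw [hs, div_mul_eq_mul_div, le_div_iff₀ (by positivity)] at h2
      rw [div_mul_eq_mul_div, le_div_iff₀ (by positivity)]
      linarith
    have h4 : d ^ 2 ≤ (ε / (2 * κ)) ^ 2 * w ^ 2 := by
      rw [← mul_pow]; exact pow_le_pow_left₀ hd0 h3 2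
    have hwpos : 0 < w := by
      by_contra hc
      have : w = 0 := le_antisymm (not_lt.1 hc) hw
      rw [this] at h2; linarith
    have h5 : w ^ 2 ≤ R ^ (2 - 2 / γ) * w ^ (2 / γ) := by
      have h6 : w ^ (2 - 2 / γ) ≤ R ^ (2 - 2 / γ) := by
        apply Real.rpow_le_rpow hw hy
        have : 2 / γ ≤ 1 := by rw [div_le_one hγ0]; linarith
        linarith
      calc w ^ 2 = w ^ (2 - 2 / γ) * w ^ (2 / γ) := by
            rw [← Real.rpow_add hwpos, sub_add_cancel, Real.rpow_two]
        _ ≤ _ := mul_le_mul_of_nonneg_right h6 hwp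
    have h7 := mul_le_mul_of_nonneg_left h5 (sq_nonneg (ε / (2 * κ)))
    have : A2 * w ^ (2 / γ) = (ε / (2 * κ)) ^ 2 * (R ^ (2 - 2 / γ) * w ^ (2 / γ)) := by rw [hA2]; ring
    nlinarith [mul_nonneg hA10.le hwp]

lemma pt_aux {E : Type*} [NormedAddCommGroup E] [InnerProductSpace ℝ E]
    (α b c i e w : ℝ) (v z g D a : E) (ha : a + (α * e) • v + D = g) 
    (hs : w ≤ ⟪D, z⟫) (hi : 0 < i) (hie : i ≤ e) (hα : 0 < α) (hb : 0 < b) (hc : c = 2 * b + 2)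
    (hM : (c + b + 1) * i ≤ α / 2 * e) :
    (⟪D, v⟫ + ⟪v, a⟫ + (c * i * (⟪z, a⟫ + ⟪v, v⟫) - c * i ^ 2 * ⟪z, v⟫)) +
      2 * b * i * (w + 1 / 2 * ‖v‖ ^ 2 + c * i * ⟪z, v⟫) ≤
    ‖g‖ * (‖v‖ + c * i * ‖z‖) - i * ‖v‖ ^ 2 - 2 * i * w +
      (c * (α + 2 * b + 1)) ^ 2 / (2 * α) * (e * i ^ 2 * ‖z‖ ^ 2) := by
  have ha' : a = g - (α * e) • v - D := by rw [← ha]; abel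
  have hva : ⟪v, a⟫ = ⟪v, g⟫ - α * e * ‖v‖ ^ 2 - ⟪D, v⟫ := by
    rw [ha', inner_sub_right, inner_sub_right, inner_smul_right, real_inner_self_eq_norm_sq,
      real_inner_comm v D]
  have hza : ⟪z, a⟫ = ⟪z, g⟫ - α * e * ⟪z, v⟫ - ⟪D, z⟫ := by
    rw [ha', inner_sub_right, inner_sub_right, inner_smul_right, real_inner_comm z D]
  rw [hva, hza, real_inner_self_eq_norm_sq]
  have hvg : ⟪v, g⟫ ≤ ‖v‖ * ‖g‖ := real_inner_le_norm _ _
  have hzg : ⟪z, g⟫ ≤ ‖z‖ * ‖g‖ := real_inner_le_norm _ _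
  have hp := abs_le.1 (abs_real_inner_le_norm z v)
  set p := ⟪z, v⟫
  set V := ‖v‖
  set Z := ‖z‖
  set G := ‖g‖
  have hV : 0 ≤ V := norm_nonneg _
  have hZ : 0 ≤ Z := norm_nonneg _
  have hc0 : 0 < c := by linarith
  have he0 : 0 < e := by linarith
  have hci : 0 < c * i := by positivity
  set L := c * (α + 2 * b + 1) with hL
  have h1 : c * i * ⟪z, g⟫ ≤ c * i * (Z * G) := mul_le_mul_of_nonneg_left hzg hci.le
  have h2 : c * i * w ≤ c * i * ⟪D, z⟫ := mul_le_mul_of_nonneg_left hs hci.le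
  have h3 : (c + b + 1) * i * V ^ 2 ≤ α / 2 * e * V ^ 2 :=
    mul_le_mul_of_nonneg_right hM (sq_nonneg _)
  have h4 : (-(c * i * (α * e)) + (2 * b - 1) * (c * i * i)) * p ≤ L * i * e * (Z * V) := by
    have hZV : 0 ≤ Z * V := by positivity
    have q1 : -(c * i * (α * e)) * p ≤ c * i * (α * e) * (Z * V) := by
      have : 0 ≤ c * i * (α * e) := by positivity
      nlinarith [hp.1]
    have q2 : (2 * b - 1) * p ≤ (2 * b + 1) * (Z * V) := by
      nlinarith [hp.1, hp.2]
    have q3 : c * i * i * ((2 * b - 1) * p) ≤ c * i * i * ((2 * b + 1) * (Z * V)) :=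
      mul_le_mul_of_nonneg_left q2 (by positivity)
    have q4 : c * i * i * ((2 * b + 1) * (Z * V)) ≤ c * i * e * ((2 * b + 1) * (Z * V)) := by
      gcongr
    rw [hL]
    nlinarith
  have h5 : L * i * e * (Z * V) ≤ α / 2 * e * V ^ 2 + L ^ 2 / (2 * α) * (e * i ^ 2 * Z ^ 2) := by
    have : α / 2 * e * V ^ 2 + L ^ 2 / (2 * α) * (e * i ^ 2 * Z ^ 2) - L * i * e * (Z * V)
       = e / (2 * α) * (α * V - L * i * Z) ^ 2 := by field_simp; ring
    have h6 : 0 ≤ e / (2 * α) * (α * V - L * i * Z) ^ 2 := by positivity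
    linarith
  have h7 : 2 * b * i * w = c * i * w - 2 * i * w := by rw [hc]; ring
  nlinarith

lemma pt2_aux (b c i e w σ V Z G p K A B ρ U U' DV W: ℝ) (hi : 0 < i) (he : 0 < e) (hw : 0 ≤ w)
    (hσ : 0 < σ) (hV : 0 ≤ V) (hZ : 0 ≤ Z) (hG : 0 ≤ G) (hc : 0 < c) (hA : 0 ≤ A) (hK : 0 < K)
    (hp1 : -(Z * V) ≤ p) (hp2 : p ≤ Z * V)
    (hρ : 0 < ρ) (hρ1 : ρ < 1)
    (hz : Z ^ 2 ≤ K * w ^ ρ) (hσe : σ ^ 2 * (e * i) = (σ ^ 2) ^ ρ)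
    (hM : 4 * c ^ 2 * K * i ≤ e)
    (hY : ∀ y, 0 ≤ y → A * K * y ^ ρ ≤ y + B)
    (hW : W = w + 1 / 2 * V ^ 2 + c * i * p)
    (hD : DV + 2 * b * i * W ≤ G * (V + c * i * Z) - i * V ^ 2 - 2 * i * w + A * (e * i ^ 2 * Z ^ 2))
    (hU : U = σ ^ 2 * W + 4)
    (hU' : U' = 2 * σ * (b * i * σ) * W + σ ^ 2 * DV) :
    U' ≤ 4 / 5 * i * (17 / 4 + 5 / 4 * B - U) + 4 * (σ * G) * U ∧ σ ^ 2 * w ≤ 4 * U := by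
  have hy0 : 0 ≤ σ ^ 2 * w := by positivity
  have hz' : σ ^ 2 * (e * i) * Z ^ 2 ≤ K * (σ ^ 2 * w) ^ ρ := by
    rw [hσe, Real.mul_rpow (by positivity) hw]
    have : 0 ≤ (σ ^ 2) ^ ρ := by positivity
    nlinarith [mul_le_mul_of_nonneg_left hz this]
  have hY1 := hY _ hy0
  have hy1 : (σ ^ 2 * w) ^ ρ ≤ 1 + σ ^ 2 * w := by
    have := Real.geom_mean_le_arith_mean2_weighted hρ.le (sub_nonneg.2 hρ1.le) hy0 zero_le_one
      (by ring)
    rw [Real.one_rpow] at this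
    nlinarith
  set y := σ ^ 2 * w with hy
  set n := σ ^ 2 * V ^ 2 with hn
  have hn0 : 0 ≤ n := by positivity
  -- q = c² σ² i² Z²
  have hq : (c * i * σ * Z) ^ 2 ≤ (1 + y) / 4 := by
    have h1 : σ ^ 2 * (e * i) * Z ^ 2 ≤ K * (1 + y) :=
      hz'.trans (mul_le_mul_of_nonneg_left hy1 hK.le)
    have h2 : 4 * c ^ 2 * i * (σ ^ 2 * (e * i) * Z ^ 2) ≤ 4 * c ^ 2 * i * (K * (1 + y)) :=
      mul_le_mul_of_nonneg_left h1 (by positivity)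
    have h3 : 4 * c ^ 2 * K * i * (1 + y) ≤ e * (1 + y) :=
      mul_le_mul_of_nonneg_right hM (by positivity)
    have h4 : e * (4 * (c * i * σ * Z) ^ 2) ≤ e * (1 + y) := by
      have e1 : e * (4 * (c * i * σ * Z) ^ 2) = 4 * c ^ 2 * i * (σ ^ 2 * (e * i) * Z ^ 2) := by ring
      rw [e1]; linarith
    linarith [le_of_mul_le_mul_left h4 he]
  set Q := c * i * σ * Z with hQ
  have hQ0 : 0 ≤ Q := by positivity
  have hnσ : n = (σ * V) ^ 2 := by rw [hn]; ring
  have hcr : Q * (σ * V) ≤ n / 4 + (1 + y) / 4 := by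
    have e1 := sq_nonneg (Q - σ * V / 2)
    have e2 : (Q - σ * V / 2) ^ 2 = Q ^ 2 - Q * (σ * V) + (σ * V) ^ 2 / 4 := by ring
    linarith
  have hp1' : -(Q * (σ * V)) ≤ σ ^ 2 * (c * i * p) := by
    have := mul_le_mul_of_nonneg_left hp1 (show 0 ≤ σ ^ 2 * (c * i) by positivity)
    calc -(Q * (σ * V)) = σ ^ 2 * (c * i) * -(Z * V) := by rw [hQ]; ring
      _ ≤ _ := this
      _ = _ := by ring
  have hp2' : σ ^ 2 * (c * i * p) ≤ Q * (σ * V) := by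
    have := mul_le_mul_of_nonneg_left hp2 (show 0 ≤ σ ^ 2 * (c * i) by positivity)
    calc σ ^ 2 * (c * i * p) = σ ^ 2 * (c * i) * p := by ring
      _ ≤ _ := this
      _ = _ := by rw [hQ]; ring
  have hUe : U = y + n / 2 + σ ^ 2 * (c * i * p) + 4 := by rw [hU, hW]; ring
  have hUlow : 3 + n + y ≤ 4 * U := by linarith
  have hUup : U ≤ 5 / 4 * y + 5 / 4 * n + 17 / 4 := by linarith
  refine ⟨?_, by linarith⟩
  have h1 : U' ≤ σ ^ 2 * (G * (V + c * i * Z) - i * V ^ 2 - 2 * i * w + A * (e * i ^ 2 * Z ^ 2)) := by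
    have := mul_le_mul_of_nonneg_left hD (sq_nonneg σ)
    rw [hU']; linarith
  have h2 : σ ^ 2 * (G * (V + c * i * Z) - i * V ^ 2 - 2 * i * w + A * (e * i ^ 2 * Z ^ 2))
      = σ * G * (σ * V + Q) + i * (- n - 2 * y + A * (σ ^ 2 * (e * i) * Z ^ 2)) := by
    rw [hn, hy, hQ]; ring
  have h3 : A * (σ ^ 2 * (e * i) * Z ^ 2) ≤ y + B := by
    have := mul_le_mul_of_nonneg_left hz' hA
    linarith
  have h4 : i * (- n - 2 * y + A * (σ ^ 2 * (e * i) * Z ^ 2)) ≤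
      i * (4 / 5 * (17 / 4 + 5 / 4 * B - U)) :=
    mul_le_mul_of_nonneg_left (by linarith) hi.le
  have h5 : σ * V + Q ≤ 3 + n + y := by
    have e1 := sq_nonneg (σ * V - 1)
    have e2 := sq_nonneg (Q - 1)
    have e3 : (σ * V - 1) ^ 2 = (σ * V) ^ 2 - 2 * (σ * V) + 1 := by ring
    have e4 : (Q - 1) ^ 2 = Q ^ 2 - 2 * Q + 1 := by ring
    linarith
  have h6 : σ * G * (σ * V + Q) ≤ σ * G * (4 * U) :=
    mul_le_mul_of_nonneg_left (by linarith) (by positivity)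
  linarith

set_option maxHeartbeats 2000000

theorem stmt_9
    {n : ℕ} (hn : 1 ≤ n)
    (F : EuclideanSpace ℝ (Fin n) → ℝ) (Fstar : ℝ)
    (Xstar : Set (EuclideanSpace ℝ (Fin n)))
    (hXstar : Xstar = {z | ∀ y, F z ≤ F y})
    (hne : Xstar.Nonempty)
    (hFstar : ∀ z ∈ Xstar, F z = Fstar)
    (hconv : ConvexOn ℝ Set.univ F)
    (hdiff : Differentiable ℝ F)
    (α t₀ θ γ₁ γ₂ r : ℝ) (hα : 0 < α) (ht₀ : 0 < t₀) (hθ : 0 ≤ θ) (hθ1 : θ < 1)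
    (hγ₁ : 2 < γ₁) (hγ₁₂ : γ₁ ≤ γ₂) (hr : r = (1 + θ) / 2)
    (g x x' x'' : ℝ → EuclideanSpace ℝ (Fin n))
    (hg : ContinuousOn g (Set.Ici t₀))
    (hx : ∀ t ∈ Set.Ici t₀, HasDerivAt x (x' t) t)
    (hx'd : ∀ t ∈ Set.Ici t₀, HasDerivAt x' (x'' t) t)
    (hx''c : ContinuousOn x'' (Set.Ici t₀))
    (hode : ∀ t ∈ Set.Ici t₀, x'' t + (α / t ^ θ) • x' t + gradient F (x t) = g t)
    (hH1 : ∀ z ∈ Xstar, ∃ η > 0, ∀ y : EuclideanSpace ℝ (Fin n),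
      ‖y - z‖ < η → F y - Fstar ≤ (1 / γ₁) * ⟪gradient F y, y - z⟫)
    (hH2 : ∀ z ∈ Xstar, ∃ K > 0, ∃ ε > 0, ∀ y : EuclideanSpace ℝ (Fin n),
      ‖y - z‖ < ε → K * Metric.infDist y Xstar ^ (γ₂ : ℝ) ≤ F y - Fstar)
    (huniq : ∃ z, Xstar = {z})
    (hint : IntegrableOn (fun t : ℝ => t ^ (r * γ₂ / (γ₂ - 2)) * ‖g t‖) (Set.Ici t₀)) :
    ∃ C > 0, ∃ t₁ ≥ t₀, ∀ t ≥ t₁,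
      F (x t) - Fstar ≤ C * t ^ (-(2 * r * γ₂ / (γ₂ - 2))) := by
  obtain ⟨z, hz⟩ := huniq
  have hzX : z ∈ Xstar := by rw [hz]; rfl
  have hmin : ∀ y, F z ≤ F y := by rw [hXstar] at hzX; exact hzX
  have hFz : F z = Fstar := hFstar z hzX
  subst hFz
  have hγ : 2 < γ₂ := by linarith
  obtain ⟨K₀, hK₀, ε, hε, hgrow⟩ := hH2 z hzX
  rw [hz] at hgrow
  simp only [Metric.infDist_singleton, dist_eq_norm] at hgrow
  set b := r * γ₂ / (γ₂ - 2) with hb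
  have hγ2 : 0 < γ₂ - 2 := by linarith
  have hr0 : 0 < r := by rw [hr]; linarith
  have hb0 : 0 < b := by positivity
  have hexp : 2 * r * γ₂ / (γ₂ - 2) = b * 2 := by rw [hb]; ring
  rw [hexp]
  clear hH1 hH2 hFstar hXstar
  -- the perturbation integral
  set h : ℝ → ℝ := fun t => 4 * (t ^ b * ‖g t‖) with hh
  set H : ℝ → ℝ := fun t => ∫ s in t₀..t, h s with hHdef
  have hhc : ContinuousOn h (Set.Ici t₀) := by
    refine continuousOn_const.mul (ContinuousOn.mul ?_ hg.norm)
    intro t ht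
    exact (Real.continuousAt_rpow_const t b (Or.inl (lt_of_lt_of_le ht₀ ht).ne')).continuousWithinAt
  have hhint : IntegrableOn h (Set.Ici t₀) := hint.const_mul 4
  have hh0 : ∀ t ≥ t₀, 0 ≤ h t := by
    intro t ht
    have : 0 < t := lt_of_lt_of_le ht₀ ht
    simp only [hh]; positivity
  set T₁ := max t₀ 1 + 1 with hT₁
  have hT₁t : t₀ < T₁ := by have := le_max_left t₀ 1; linarith
  have hT₁1 : 1 < T₁ := by have := le_max_right t₀ 1; linarith
  have hHd : ∀ t ≥ T₁, HasDerivAt H (h t) t := by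
    intro t ht
    have htt : t₀ < t := lt_of_lt_of_le hT₁t ht
    apply intervalIntegral.integral_hasDerivAt_right
    · apply ContinuousOn.intervalIntegrable
      rw [Set.uIcc_of_le htt.le]
      exact hhc.mono Set.Icc_subset_Ici_self
    · exact (hhc.mono Set.Ioi_subset_Ici_self).stronglyMeasurableAtFilter isOpen_Ioi t htt
    · exact hhc.continuousAt (Ici_mem_nhds htt)
  have hH0 : ∀ t ≥ T₁, 0 ≤ H t := by
    intro t ht
    have htt : t₀ < t := lt_of_lt_of_le hT₁t ht
    exact intervalIntegral.integral_nonneg htt.le (fun u hu => hh0 u hu.1)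
  have hHM : ∀ t ≥ T₁, H t ≤ ∫ s in Set.Ici t₀, h s := by
    intro t ht
    have htt : t₀ < t := lt_of_lt_of_le hT₁t ht
    simp only [hHdef]
    rw [intervalIntegral.integral_of_le htt.le]
    apply setIntegral_mono_set hhint
    · exact (ae_restrict_mem measurableSet_Ici).mono (fun s hs => hh0 s hs)
    · exact (Set.Ioc_subset_Ioi_self.trans Set.Ioi_subset_Ici_self).eventuallyLE
  -- the basic energy is bounded
  obtain ⟨R, hR0, hR⟩ : ∃ R, 0 ≤ R ∧ ∀ t ≥ T₁, F (x t) - F z + 1 / 2 * ‖x' t‖ ^ 2 + 1 ≤ R := by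
    refine gron_aux T₁ 0 0 (∫ s in Set.Ici t₀, h s) (by linarith) le_rfl le_rfl
      (fun t => F (x t) - F z + 1 / 2 * ‖x' t‖ ^ 2 + 1)
      (fun t => ⟪gradient F (x t), x' t⟫ + 1 / 2 * (2 * ⟪x' t, x'' t⟫)) h H ?_ hHd hH0 hHM ?_
    · intro t ht
      have ht' : t ∈ Set.Ici t₀ := (hT₁t.le.trans ht : t₀ ≤ t)
      exact (((chain_aux F hdiff x _ t (hx t ht')).sub_const (F z)).add
        ((hx'd t ht').norm_sq.const_mul (1 / 2))).add_const 1
    · intro t ht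
      have ht' : t ∈ Set.Ici t₀ := (hT₁t.le.trans ht : t₀ ≤ t)
      have ht1 : 1 ≤ t := by linarith
      have ht0 : 0 < t := by linarith
      have ha : x'' t = g t - (α / t ^ θ) • x' t - gradient F (x t) := by
        rw [← hode t ht']; abel
      have hva : ⟪x' t, x'' t⟫ = ⟪x' t, g t⟫ - α / t ^ θ * ‖x' t‖ ^ 2 - ⟪gradient F (x t), x' t⟫ := by
        rw [ha, inner_sub_right, inner_sub_right, inner_smul_right, real_inner_self_eq_norm_sq,
          real_inner_comm (x' t) (gradient F (x t))]
      have h1 : ⟪x' t, g t⟫ ≤ ‖x' t‖ * ‖g t‖ := real_inner_le_norm _ _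
      have h2 : 0 ≤ α / t ^ θ * ‖x' t‖ ^ 2 := by positivity
      have h3 : 1 ≤ t ^ b := Real.one_le_rpow ht1 hb0.le
      have hW := hmin (x t)
      have h4 : ‖x' t‖ ≤ F (x t) - F z + 1 / 2 * ‖x' t‖ ^ 2 + 1 := by
        nlinarith [sq_nonneg (‖x' t‖ - 1)]
      have h5 : ‖g t‖ ≤ h t := by
        simp only [hh]
        nlinarith [mul_le_mul_of_nonneg_right h3 (norm_nonneg (g t)), norm_nonneg (g t)]
      have h6 : ‖x' t‖ * ‖g t‖ ≤ (F (x t) - F z + 1 / 2 * ‖x' t‖ ^ 2 + 1) * h t :=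
        mul_le_mul h4 h5 (norm_nonneg _) (le_trans (norm_nonneg _) h4)
      simp only [zero_div, zero_mul, zero_add]
      rw [hva]
      linarith
  obtain ⟨K, hK, hzK⟩ := growth_aux F hconv z hmin γ₂ K₀ ε R hγ hK₀ hε hR0 hgrow
  set c := 2 * b + 2 with hc
  have hc0 : 0 < c := by positivity
  set A := (c * (α + 2 * b + 1)) ^ 2 / (2 * α) with hA
  have hA0 : 0 < A := by positivity
  set ρ := 2 / γ₂ with hρ
  have hρ0 : 0 < ρ := by positivity
  have hρ1 : ρ < 1 := by rw [hρ, div_lt_one (by linarith)]; exact hγ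
  obtain ⟨B₀, hB₀, hY₀⟩ := young_aux ρ (1 / (A * K)) hρ0 hρ1 (by positivity)
  set B := A * K * B₀ with hB
  have hB0 : 0 ≤ B := by positivity
  have hY : ∀ y, 0 ≤ y → A * K * y ^ ρ ≤ y + B := by
    intro y hy
    have := mul_le_mul_of_nonneg_left (hY₀ y hy) (show 0 ≤ A * K by positivity)
    have e : A * K * (1 / (A * K) * y + B₀) = y + B := by rw [hB]; field_simp
    linarith
  -- choose a large time
  set M := 1 + 4 * c ^ 2 * K + 2 * (c + b + 1) / α with hM
  obtain ⟨T₂, hT₂⟩ := Filter.eventually_atTop.1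
    ((tendsto_rpow_atTop (show 0 < 1 - θ by linarith)).eventually_ge_atTop M)
  set T := max T₁ T₂ with hT
  have hTT₁ : T₁ ≤ T := le_max_left _ _
  have hMi : ∀ t ≥ T, M * t⁻¹ ≤ (t ^ θ)⁻¹ := by
    intro t ht
    have ht0 : 0 < t := by linarith
    have h1 := hT₂ t ((le_max_right _ _).trans ht)
    rw [Real.rpow_sub ht0, Real.rpow_one, le_div_iff₀ (by positivity)] at h1
    rw [← div_eq_mul_inv, div_le_iff₀ ht0, inv_mul_eq_div, le_div_iff₀ (by positivity)]
    exact h1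
  have main : ∀ t ≥ T,
      (2 * (t ^ b) * (b * t⁻¹ * t ^ b) *
        (F (x t) - F z + 1 / 2 * ‖x' t‖ ^ 2 + c * t⁻¹ * ⟪x t - z, x' t⟫) +
        (t ^ b) ^ 2 * (⟪gradient F (x t), x' t⟫ + ⟪x' t, x'' t⟫ +
          (c * t⁻¹ * (⟪x t - z, x'' t⟫ + ⟪x' t, x' t⟫) - c * t⁻¹ ^ 2 * ⟪x t - z, x' t⟫))
      ≤ 4 / 5 * t⁻¹ * (17 / 4 + 5 / 4 * B -
          ((t ^ b) ^ 2 * (F (x t) - F z + 1 / 2 * ‖x' t‖ ^ 2 + c * t⁻¹ * ⟪x t - z, x' t⟫) + 4)) +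
        4 * (t ^ b * ‖g t‖) *
          ((t ^ b) ^ 2 * (F (x t) - F z + 1 / 2 * ‖x' t‖ ^ 2 + c * t⁻¹ * ⟪x t - z, x' t⟫) + 4)) ∧
      (t ^ b) ^ 2 * (F (x t) - F z) ≤ 4 *
        ((t ^ b) ^ 2 * (F (x t) - F z + 1 / 2 * ‖x' t‖ ^ 2 + c * t⁻¹ * ⟪x t - z, x' t⟫) + 4) := by
    intro t ht
    have htT₁ : t ≥ T₁ := hTT₁.trans ht
    have ht' : t ∈ Set.Ici t₀ := (hT₁t.le.trans htT₁ : t₀ ≤ t)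
    have ht0 : 0 < t := by linarith
    have hi : 0 < t⁻¹ := by positivity
    have he : 0 < (t ^ θ)⁻¹ := by positivity
    have hw : 0 ≤ F (x t) - F z := sub_nonneg.2 (hmin _)
    have hwR : F (x t) - F z ≤ R := by
      have := hR t htT₁
      have := sq_nonneg ‖x' t‖
      linarith
    have hMt := hMi t ht
    have m1 : 0 ≤ 4 * c ^ 2 * K := by positivity
    have m2 : 0 ≤ 2 * (c + b + 1) / α := by positivity
    have hie : t⁻¹ ≤ (t ^ θ)⁻¹ := by
      have h1 : 1 * t⁻¹ ≤ M * t⁻¹ := mul_le_mul_of_nonneg_right (by linarith) hi.le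
      linarith
    have hM1 : 4 * c ^ 2 * K * t⁻¹ ≤ (t ^ θ)⁻¹ := by
      refine le_trans (mul_le_mul_of_nonneg_right ?_ hi.le) hMt
      linarith
    have hM2 : (c + b + 1) * t⁻¹ ≤ α / 2 * (t ^ θ)⁻¹ := by
      have h1 : 2 * (c + b + 1) / α * t⁻¹ ≤ (t ^ θ)⁻¹ := by
        refine le_trans (mul_le_mul_of_nonneg_right ?_ hi.le) hMt
        linarith
      have h2 := mul_le_mul_of_nonneg_left h1 (show 0 ≤ α / 2 by positivity)
      have e : α / 2 * (2 * (c + b + 1) / α * t⁻¹) = (c + b + 1) * t⁻¹ := by field_simp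
      linarith
    have hD := pt_aux α b c t⁻¹ (t ^ θ)⁻¹ (F (x t) - F z) (x' t) (x t - z) (g t)
      (gradient F (x t)) (x'' t) (by rw [← div_eq_mul_inv]; exact hode t ht')
      (grad_aux F hconv hdiff (x t) z) hi hie hα hb0 hc hM2
    have hp := abs_le.1 (abs_real_inner_le_norm (x t - z) (x' t))
    have hσe : (t ^ b) ^ 2 * ((t ^ θ)⁻¹ * t⁻¹) = ((t ^ b) ^ 2) ^ ρ := by
      have e1 : (t ^ b) ^ 2 = t ^ (b * 2) := by
        rw [Real.rpow_mul ht0.le, Real.rpow_two]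
      have e2 : t⁻¹ = t ^ (-1 : ℝ) := by rw [Real.rpow_neg_one]
      rw [e1, e2, ← Real.rpow_neg ht0.le, ← Real.rpow_add ht0, ← Real.rpow_add ht0,
        ← Real.rpow_mul ht0.le]
      congr 1
      rw [hb, hρ, hr]
      have : γ₂ ≠ 0 := by linarith
      field_simp
      ring
    exact pt2_aux b c t⁻¹ (t ^ θ)⁻¹ (F (x t) - F z) (t ^ b) ‖x' t‖ ‖x t - z‖ ‖g t‖
      ⟪x t - z, x' t⟫ K A B ρ _ _ _ _ hi he hw (by positivity) (norm_nonneg _) (norm_nonneg _)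
      (norm_nonneg _) hc0 hA0.le hK hp.1 hp.2 hρ0 hρ1 (hzK _ hwR) hσe hM1 hY rfl hD rfl rfl
  obtain ⟨C, hC0, hC⟩ := gron_aux T (4 / 5) (17 / 4 + 5 / 4 * B) (∫ s in Set.Ici t₀, h s)
      (by linarith) (by norm_num) (by positivity)
      (fun t => (t ^ b) ^ 2 * (F (x t) - F z + 1 / 2 * ‖x' t‖ ^ 2 + c * t⁻¹ * ⟪x t - z, x' t⟫) + 4)
      (fun t => 2 * (t ^ b) * (b * t⁻¹ * t ^ b) *
        (F (x t) - F z + 1 / 2 * ‖x' t‖ ^ 2 + c * t⁻¹ * ⟪x t - z, x' t⟫) +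
        (t ^ b) ^ 2 * (⟪gradient F (x t), x' t⟫ + ⟪x' t, x'' t⟫ +
          (c * t⁻¹ * (⟪x t - z, x'' t⟫ + ⟪x' t, x' t⟫) - c * t⁻¹ ^ 2 * ⟪x t - z, x' t⟫))) h H
      (by
        intro t ht
        have htT₁ : t ≥ T₁ := hTT₁.trans ht
        have ht' : t ∈ Set.Ici t₀ := (hT₁t.le.trans htT₁ : t₀ ≤ t)
        have ht0 : 0 < t := by linarith
        have d1 : HasDerivAt (fun t : ℝ => t ^ b) (b * t ^ (b - 1)) t :=
          Real.hasDerivAt_rpow_const (Or.inl ht0.ne')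
        have d2 := d1.pow 2
        have d3 := ((chain_aux F hdiff x _ t (hx t ht')).sub_const (F z)).add
          ((hx'd t ht').norm_sq.const_mul (1 / 2))
        have d4 := ((hx t ht').sub_const z).inner ℝ (hx'd t ht')
        have d5 := ((hasDerivAt_inv ht0.ne').const_mul c).mul d4
        have d6 := (d2.mul (d3.add d5)).add_const 4
        refine d6.congr_deriv ?_
        simp only [Pi.add_apply, Pi.mul_apply, Pi.pow_apply]
        rw [Real.rpow_sub_one ht0.ne']
        push_cast
        field_simp
        ring)
      (fun t ht => hHd t (hTT₁.trans ht)) (fun t ht => hH0 t (hTT₁.trans ht))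
      (fun t ht => hHM t (hTT₁.trans ht))
      (by
        intro t ht
        have := (main t ht).1
        simpa only [hh, div_eq_mul_inv] using this)
  refine ⟨4 * C + 1, by positivity, T, by linarith, fun t ht => ?_⟩
  have ht0 : 0 < t := by linarith
  have h1 := (main t ht).2
  have h2 := hC t ht
  have e1 : (t ^ b) ^ 2 = t ^ (b * 2) := by
    rw [Real.rpow_mul ht0.le, Real.rpow_two]
  have h3 : (F (x t) - F z) * t ^ (b * 2) ≤ 4 * C + 1 := by
    rw [← e1]; linarith
  rw [Real.rpow_neg ht0.le, ← div_eq_mul_inv, le_div_iff₀ (by positivity)]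
  exact h3
end

section
/- Let α > 0, θ ∈ [0,1], t₀ > 0 and γ > 2, and set r = (1 + θ)/2. Let x : [t₀, ∞) → ℝⁿ be a solution of the perturbed inertial ODE with damping α/t^θ. Assume that ∫_{t₀}^∞ t^{rγ/(γ − 2)} ‖g(t)‖ dt < ∞, that F satisfies hypotheses H1(γ) and H2(γ) and admits a unique minimizer, and that either (θ = 1 and α ≥ (γ + 2)/(γ − 2)) or θ < 1. Then there exist C > 0 and t₁ ≥ t₀ such that for all t ≥ t₁, ‖x'(t)‖ ≤ C · t^{−rγ/(γ − 2)}. -/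
open MeasureTheory
open scoped RealInnerProductSpace

/-- the Lyapunov function -/
noncomputable def lyapG {H : Type*} [NormedAddCommGroup H] [InnerProductSpace ℝ H]
    (F : H → ℝ) (Fs : ℝ) (z : H) (x x' : ℝ → H) (α θ lam q : ℝ) (t : ℝ) : ℝ :=
  (F (x t) - Fs) + 1 / 2 * ⟪x' t, x' t⟫ + lam * t⁻¹ * ⟪x' t, x t - z⟫
    + (α * lam * t ^ (-(1 + θ)) + lam * (1 - q) * (t⁻¹) ^ 2) / 2 * ⟪x t - z, x t - z⟫

lemma lyapG_deriv {H : Type*} [NormedAddCommGroup H] [InnerProductSpace ℝ H] [CompleteSpace H]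
    (F : H → ℝ) (Fs : ℝ) (z : H) (hdiff : Differentiable ℝ F)
    (x x' x'' g : ℝ → H) (α θ lam q γ t : ℝ) (ht : 0 < t) (hl : 0 ≤ lam)
    (hx : HasDerivAt x (x' t) t) (hx' : HasDerivAt x' (x'' t) t)
    (hode : x'' t + (α / t ^ θ) • x' t + gradient F (x t) = g t)
    (hγ : γ * (F (x t) - Fs) ≤ ⟪gradient F (x t), x t - z⟫)
    (hα : (lam + q / 2) / t ≤ α / t ^ θ) :
    ∃ G', HasDerivAt (lyapG F Fs z x x' α θ lam q) G' t ∧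
      G' + q / t * lyapG F Fs z x x' α θ lam q t ≤
        -((lam * γ - q) / t) * (F (x t) - Fs)
        + (α * lam * (q - 1 - θ) * (t ^ (-(1 + θ)) / t) + lam * (1 - q) * (q - 2) * (t⁻¹) ^ 3) / 2
            * ‖x t - z‖ ^ 2
        + ‖g t‖ * (‖x' t‖ + lam / t * ‖x t - z‖) := by
  have hF : HasDerivAt (fun s => F (x s)) ⟪gradient F (x t), x' t⟫ t := by
    have h1 := (hdiff (x t)).hasGradientAt.hasFDerivAt
    have h2 := h1.comp_hasDerivAt t hx
    have h3 : InnerProductSpace.toDual ℝ H (gradient F (x t)) (x' t) = ⟪gradient F (x t), x' t⟫ := by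
      simp only [InnerProductSpace.toDual_apply_apply]
    rw [← h3]
    exact h2
  have hd : HasDerivAt (fun s => x s - z) (x' t) t := hx.sub_const z
  have hvv := hx'.inner ℝ hx'
  have hvd := hx'.inner ℝ hd
  have hdd := hd.inner ℝ hd
  have hinv : HasDerivAt (fun s : ℝ => s⁻¹) (-(t ^ 2)⁻¹) t := hasDerivAt_inv ht.ne'
  have hinv2 := hinv.pow 2
  have hP : HasDerivAt (fun s : ℝ => s ^ (-(1 + θ))) (-(1 + θ) * t ^ (-(1 + θ) - 1)) t :=
    Real.hasDerivAt_rpow_const (Or.inl ht.ne')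
  have hP1 : t ^ (-(1 + θ) - 1) = t ^ (-(1 + θ)) / t := by
    rw [Real.rpow_sub ht, Real.rpow_one]
  have hθ : α / t ^ θ = α * t * t ^ (-(1 + θ)) := by
    rw [neg_add, Real.rpow_add ht, Real.rpow_neg_one, Real.rpow_neg ht.le]; field_simp
  have hD := (((hF.sub_const Fs).add (hvv.const_mul (1/2))).add ((hinv.const_mul lam).mul hvd)).add
    (((((hP.const_mul (α * lam)).add (hinv2.const_mul (lam * (1 - q)))).div_const 2)).mul hdd)
  refine ⟨_, hD, ?_⟩
  have hxx : x'' t = g t - (α / t ^ θ) • x' t - gradient F (x t) := by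
    rw [← hode]; abel
  have hcs1 : ⟪g t, x' t⟫ ≤ ‖g t‖ * ‖x' t‖ := real_inner_le_norm _ _
  have hcs2 : ⟪g t, x t - z⟫ ≤ ‖g t‖ * ‖x t - z‖ := real_inner_le_norm _ _
  obtain ⟨A, hA⟩ : ∃ A, A = t * t ^ (-(1 + θ)) := ⟨_, rfl⟩
  have hPA : t ^ (-(1 + θ)) = t⁻¹ * A := by rw [hA]; field_simp
  have hθ' : α / t ^ θ = α * A := by rw [hθ, hA]; ring
  simp only [lyapG, Pi.add_apply]
  rw [hP1, hxx, ← real_inner_self_eq_norm_sq]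
  rw [hθ'] at hα ⊢
  simp only [inner_sub_left (𝕜 := ℝ) (_ - _) (gradient F (x t)), inner_sub_left (𝕜 := ℝ) (g t),
    inner_sub_right (𝕜 := ℝ) (x' t) (_ - _), inner_sub_right (𝕜 := ℝ) (x' t) (g t),
    inner_smul_left, inner_smul_right, RCLike.conj_to_real]
  have e1 : ⟪x' t, g t⟫ = ⟪g t, x' t⟫ := real_inner_comm _ _
  have e2 : ⟪x' t, gradient F (x t)⟫ = ⟪gradient F (x t), x' t⟫ := real_inner_comm _ _
  have e3 : ⟪x t - z, x' t⟫ = ⟪x' t, x t - z⟫ := real_inner_comm _ _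
  rw [e1, e2, e3, hPA]
  have hVV : 0 ≤ ⟪x' t, x' t⟫ := real_inner_self_nonneg
  have hs : 0 ≤ t⁻¹ := (inv_pos.2 ht).le
  generalize ⟪x' t, x' t⟫ = VV at *
  generalize ⟪x' t, x t - z⟫ = VD at *
  generalize ⟪x t - z, x t - z⟫ = DD at *
  generalize ⟪g t, x' t⟫ = gv at *
  generalize ⟪g t, x t - z⟫ = gd at *
  generalize ⟪gradient F (x t), x' t⟫ = fv at *
  generalize ⟪gradient F (x t), x t - z⟫ = fd at *
  generalize F (x t) - Fs = f at *
  generalize ‖g t‖ = ng at *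
  generalize ‖x' t‖ = nv at *
  generalize ‖x t - z‖ = nd at *
  have hsq : (t ^ 2)⁻¹ = t⁻¹ ^ 2 := by rw [inv_pow]
  rw [hsq]
  simp only [div_eq_mul_inv _ t] at *
  generalize t⁻¹ = s at *
  have i1 := mul_nonneg (sub_nonneg.2 hα) hVV
  have i2 := mul_nonneg (mul_nonneg hl hs) (sub_nonneg.2 hγ)
  have i3 := mul_nonneg (mul_nonneg hl hs) (sub_nonneg.2 hcs2)
  norm_num
  rw [hsq]
  linarith

lemma gronwall_bdd (u u' w : ℝ → ℝ) (T e M : ℝ) (hT : 0 < T) (he : 0 ≤ e) (hM : 0 ≤ M)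
    (hw : ContinuousOn w (Set.Ici T)) (hw0 : ∀ t ≥ T, 0 ≤ w t) (hwi : IntegrableOn w (Set.Ici T))
    (hu : ∀ t ≥ T, HasDerivAt u (u' t) t)
    (hle : ∀ t ≥ T, u' t ≤ -(e / t) * (u t - M) + w t * (1 + u t)) :
    ∃ B, 0 < B ∧ ∀ t ≥ T, u t ≤ B := by
  set I : ℝ → ℝ := fun t => ∫ s in T..t, w s with hI
  have hii : ∀ t ≥ T, IntervalIntegrable w volume T t := fun t ht =>
    (hw.mono (by rw [Set.uIcc_of_le ht]; exact Set.Icc_subset_Ici_self)).intervalIntegrable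
  have hId : ∀ t > T, HasDerivAt I (w t) t := by
    intro t ht
    apply intervalIntegral.integral_hasDerivAt_right (hii t ht.le)
    · exact (hw.mono Set.Ioi_subset_Ici_self).stronglyMeasurableAtFilter isOpen_Ioi _ ht
    · exact hw.continuousAt (Ici_mem_nhds ht)
  have hI0 : ∀ t ≥ T, 0 ≤ I t := fun t ht =>
    intervalIntegral.integral_nonneg ht (fun s hs => hw0 s hs.1)
  have hIW : ∀ t ≥ T, I t ≤ ∫ s in Set.Ici T, w s := by
    intro t ht
    rw [hI]; dsimp only
    rw [intervalIntegral.integral_of_le ht]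
    apply setIntegral_mono_set hwi
    · exact (ae_restrict_mem measurableSet_Ici).mono (fun s hs => hw0 s hs)
    · exact (Set.Ioc_subset_Ioi_self.trans Set.Ioi_subset_Ici_self).eventuallyLE
  have hIc : ContinuousOn I (Set.Ici T) := by
    intro t ht
    rcases eq_or_lt_of_le (show T ≤ t from ht) with h | h
    · have h2 : ContinuousOn I (Set.Icc T (T+1)) := by
        have hu : Set.uIcc T (T + 1) = Set.Icc T (T + 1) := Set.uIcc_of_le (by linarith)
        have := intervalIntegral.continuousOn_primitive_interval (μ := volume) (f := w)
          (a := T) (b := T + 1) (by rw [hu]; exact hwi.mono_set Set.Icc_subset_Ici_self)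
        rwa [hu] at this
      subst h
      have h3 := h2 T ⟨le_refl _, by linarith⟩
      refine h3.mono_of_mem_nhdsWithin ?_
      exact Icc_mem_nhdsGE (by linarith)
    · exact (hId t h).continuousAt.continuousWithinAt
  set V : ℝ → ℝ := fun t => t ^ e * ((1 + u t) * Real.exp (-(I t)) - (M + 1)) with hV
  have hVc : ContinuousOn V (Set.Ici T) := by
    have huc : ContinuousOn u (Set.Ici T) := fun t ht => (hu t ht).continuousAt.continuousWithinAt
    have hpc : ContinuousOn (fun t : ℝ => t ^ e) (Set.Ici T) := fun t ht =>
      (Real.continuousAt_rpow_const _ _ (Or.inr he)).continuousWithinAt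
    exact hpc.mul (((continuousOn_const.add huc).mul (hIc.neg.rexp)).sub continuousOn_const)
  have hVd : ∀ t > T, ∃ V', HasDerivAt V V' t ∧ V' ≤ 0 := by
    intro t ht
    have ht0 : 0 < t := hT.trans ht
    have h1 : HasDerivAt (fun t : ℝ => t ^ e) (e * t ^ (e - 1)) t :=
      Real.hasDerivAt_rpow_const (Or.inl ht0.ne')
    have h2 := h1.mul ((((hu t ht.le).const_add 1).mul ((hId t ht).neg.exp)).sub_const (M + 1))
    refine ⟨_, h2, ?_⟩
    have h3 : t ^ (e - 1) = t ^ e / t := by rw [Real.rpow_sub ht0, Real.rpow_one]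
    simp only [Pi.neg_apply, h3, Pi.mul_apply]
    have hE1 : Real.exp (-(I t)) ≤ 1 := Real.exp_le_one_iff.2 (neg_nonpos.2 (hI0 t ht.le))
    have hE0 := Real.exp_pos (-(I t))
    have hp : 0 < t ^ e := Real.rpow_pos_of_pos ht0 _
    have hl := hle t ht.le
    generalize Real.exp (-(I t)) = X at *
    generalize t ^ e = p at *
    have k : 0 ≤ e / t := by positivity
    have j1 := mul_nonneg (mul_nonneg hp.le hE0.le) (sub_nonneg.2 hl)
    have j2 := mul_nonneg (mul_nonneg hp.le k) (mul_nonneg (show 0 ≤ M + 1 by linarith) (sub_nonneg.2 hE1))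
    simp only [div_eq_mul_inv _ t] at *
    linarith
  have hanti : AntitoneOn V (Set.Ici T) := by
    apply antitoneOn_of_deriv_nonpos (convex_Ici T) hVc
    · rw [interior_Ici]
      intro t ht
      obtain ⟨V', h, _⟩ := hVd t ht
      exact h.differentiableAt.differentiableWithinAt
    · rw [interior_Ici]
      intro t ht
      obtain ⟨V', h, h'⟩ := hVd t ht
      rw [h.deriv]; exact h'
  set W := ∫ s in Set.Ici T, w s
  have hTe : 0 < T ^ e := Real.rpow_pos_of_pos hT _
  refine ⟨Real.exp W * (|V T| / T ^ e + (M + 1)), by positivity, fun t ht => ?_⟩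
  have h1 : V t ≤ V T := hanti (Set.mem_Ici.2 le_rfl) ht ht
  have hte : T ^ e ≤ t ^ e := Real.rpow_le_rpow hT.le ht he
  have h2 : (1 + u t) * Real.exp (-(I t)) - (M + 1) ≤ |V T| / T ^ e := by
    rw [le_div_iff₀ hTe]
    by_cases hn : (1 + u t) * Real.exp (-(I t)) - (M + 1) ≤ 0
    · exact (mul_nonpos_of_nonpos_of_nonneg hn hTe.le).trans (abs_nonneg _)
    · push Not at hn
      calc _ ≤ ((1 + u t) * Real.exp (-(I t)) - (M + 1)) * t ^ e := by gcongr
        _ = V t := by rw [hV]; ring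
        _ ≤ _ := h1.trans (le_abs_self _)
  have h3 : Real.exp (-(I t)) * Real.exp (I t) = 1 := by rw [← Real.exp_add]; simp
  calc u t ≤ 1 + u t := by linarith
    _ = ((1 + u t) * Real.exp (-(I t))) * Real.exp (I t) := by rw [mul_assoc, h3, mul_one]
    _ ≤ (|V T| / T ^ e + (M + 1)) * Real.exp W := by
        gcongr
        · linarith
        · exact hIW t ht
    _ = _ := mul_comm _ _

lemma convex_grad {H : Type*} [NormedAddCommGroup H] [InnerProductSpace ℝ H] [CompleteSpace H]
    (F : H → ℝ) (hdiff : Differentiable ℝ F) (hconv : ConvexOn ℝ Set.univ F) (y z : H) :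
    F y - F z ≤ ⟪gradient F y, y - z⟫ := by
  have hl : HasDerivAt (fun s : ℝ => z + s • (y - z)) (y - z) 1 := by
    simpa using ((hasDerivAt_id (1:ℝ)).smul_const (y - z)).const_add z
  have h1 := (hdiff (z + (1:ℝ) • (y - z))).hasGradientAt.hasFDerivAt
  have h2 := h1.comp_hasDerivAt 1 hl
  have hc : ConvexOn ℝ Set.univ (F ∘ fun s : ℝ => z + s • (y - z)) := by
    refine ⟨convex_univ, fun a _ b _ p q hp hq hpq => ?_⟩
    have := hconv.2 (Set.mem_univ (z + a • (y - z))) (Set.mem_univ (z + b • (y - z))) hp hq hpq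
    have e : z + (p • a + q • b) • (y - z) = p • (z + a • (y - z)) + q • (z + b • (y - z)) := by
      obtain rfl : q = 1 - p := by linarith
      simp only [smul_eq_mul]
      module
    simpa only [Function.comp, e] using this
  have h3 := hc.slope_le_of_hasDerivAt (Set.mem_univ 0) (Set.mem_univ 1) one_pos h2
  rw [slope_def_field] at h3
  rw [InnerProductSpace.toDual_apply_apply] at h3
  simpa only [Function.comp, one_smul, add_sub_cancel, zero_smul, add_zero, sub_zero, div_one] using h3

lemma coercive {H : Type*} [NormedAddCommGroup H] [InnerProductSpace ℝ H]
    (F : H → ℝ) (hconv : ConvexOn ℝ Set.univ F) (z : H) (ρ m : ℝ) (hρ : 0 < ρ)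
    (hm : ∀ y, ‖y - z‖ = ρ → m ≤ F y - F z) (y : H) (hy : ρ ≤ ‖y - z‖) :
    m * ‖y - z‖ ≤ ρ * (F y - F z) := by
  have hn : 0 < ‖y - z‖ := hρ.trans_le hy
  set c := ρ / ‖y - z‖ with hc
  have hc0 : 0 ≤ c := by positivity
  have hc1 : c ≤ 1 := (div_le_one hn).2 hy
  have h1 := hconv.2 (Set.mem_univ z) (Set.mem_univ y) (sub_nonneg.2 hc1) hc0 (by ring)
  have h2 := hm ((1 - c) • z + c • y) (by
    have : (1 - c) • z + c • y - z = c • (y - z) := by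
      rw [sub_smul, one_smul, smul_sub]; abel
    rw [this, norm_smul, Real.norm_of_nonneg hc0, hc]; field_simp)
  simp only [smul_eq_mul] at h1
  have h3 : m ≤ c * (F y - F z) := by linarith
  have h4 : c * ‖y - z‖ = ρ := by rw [hc]; field_simp
  calc m * ‖y - z‖ ≤ (c * (F y - F z)) * ‖y - z‖ := by gcongr
    _ = (c * ‖y - z‖) * (F y - F z) := by ring
    _ = _ := by rw [h4]

lemma young_aux_s10 (K γ r : ℝ) (hK : 0 < K) (hγ : 2 < γ) (D e : ℝ) (hD : 0 ≤ D) (he : 0 < e) :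
    ∃ C, 0 ≤ C ∧ ∀ t d f : ℝ, 0 < t → 0 ≤ d → K * d ^ γ ≤ f →
      D * (t ^ (-(2 * r)) * d ^ 2) ≤ e * f + C * t ^ (-(2 * (r * γ / (γ - 2)))) := by
  have hγ2 : 0 < γ - 2 := by linarith
  rcases hD.eq_or_lt with h0 | hD
  · refine ⟨0, le_rfl, fun t d f ht hd hf => ?_⟩
    have : 0 ≤ f := le_trans (by positivity) hf
    rw [← h0]; simp only [zero_mul, add_zero]; positivity
  set L := D / (K * e) with hL
  have hL0 : 0 < L := by positivity
  refine ⟨D * L ^ (2 / (γ - 2)), by positivity, fun t d f ht hd hf => ?_⟩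
  have hf0 : 0 ≤ f := le_trans (by positivity) hf
  have hP : 0 < t ^ (-(2 * r)) := Real.rpow_pos_of_pos ht _
  rcases hd.eq_or_lt with h0 | hd
  · rw [← h0]; simp only [ne_eq, OfNat.ofNat_ne_zero, not_false_eq_true, zero_pow, mul_zero]; positivity
  have hdγ : d ^ γ = d ^ (γ - 2) * d ^ 2 := by
    rw [← Real.rpow_natCast d 2, ← Real.rpow_add hd]; norm_num
  by_cases h : L * t ^ (-(2 * r)) ≤ d ^ (γ - 2)
  · have h1 : D * t ^ (-(2 * r)) ≤ K * e * d ^ (γ - 2) := by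
      have : D = K * e * L := by rw [hL]; field_simp
      rw [this, mul_assoc]; gcongr
    have : D * (t ^ (-(2 * r)) * d ^ 2) ≤ e * f := by
      calc _ = D * t ^ (-(2 * r)) * d ^ 2 := by ring
        _ ≤ K * e * d ^ (γ - 2) * d ^ 2 := by gcongr
        _ = e * (K * d ^ γ) := by rw [hdγ]; ring
        _ ≤ _ := by gcongr
    have : 0 ≤ D * L ^ (2 / (γ - 2)) * t ^ (-(2 * (r * γ / (γ - 2)))) := by positivity
    linarith
  · push Not at h
    have h1 : d ^ 2 ≤ (L * t ^ (-(2 * r))) ^ (2 / (γ - 2)) := by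
      have := Real.rpow_le_rpow (by positivity) h.le (show 0 ≤ 2 / (γ - 2) by positivity)
      rw [← Real.rpow_mul hd.le, mul_div_cancel₀ _ hγ2.ne'] at this
      exact_mod_cast this
    have h2 : t ^ (-(2 * r)) * (L * t ^ (-(2 * r))) ^ (2 / (γ - 2))
        = L ^ (2 / (γ - 2)) * t ^ (-(2 * (r * γ / (γ - 2)))) := by
      rw [Real.mul_rpow hL0.le hP.le, ← Real.rpow_mul ht.le, mul_left_comm, ← Real.rpow_add ht]
      congr 2
      field_simp; ring
    have h3 : D * (t ^ (-(2 * r)) * d ^ 2) ≤ D * (t ^ (-(2 * r)) * (L * t ^ (-(2 * r))) ^ (2 / (γ - 2))) := by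
      gcongr
    rw [h2] at h3
    have : 0 ≤ e * f := by positivity
    linarith

set_option maxHeartbeats 1000000 in
lemma lyapG_step3 {H : Type*} [NormedAddCommGroup H] [InnerProductSpace ℝ H] [CompleteSpace H]
    (F : H → ℝ) (Fs : ℝ) (z : H) (hdiff : Differentiable ℝ F)
    (x x' x'' g : ℝ → H) (α θ γ r p K T δ lam q : ℝ) (hα : 0 < α) (hT : 1 ≤ T) (hθ : 0 ≤ θ) (hθ1 : θ ≤ 1)
    (hγ2 : 2 < γ) (hr : r = (1 + θ) / 2) (hp : p = r * γ / (γ - 2)) (hK : 0 < K)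
    (hδ0 : 0 ≤ δ) (hq : q = 2 * p + δ) (hlam : lam * γ = 2 * p + 2 * δ)
    (hδ : 0 < δ ∨ (θ = 1 ∧ q = α + 1))
    (hgc : ContinuousOn g (Set.Ici T))
    (hx : ∀ t ≥ T, HasDerivAt x (x' t) t) (hx' : ∀ t ≥ T, HasDerivAt x' (x'' t) t)
    (hode : ∀ t ≥ T, x'' t + (α / t ^ θ) • x' t + gradient F (x t) = g t)
    (hγ : ∀ t ≥ T, γ * (F (x t) - Fs) ≤ ⟪gradient F (x t), x t - z⟫)
    (hH2 : ∀ t ≥ T, K * ‖x t - z‖ ^ γ ≤ F (x t) - Fs)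
    (hαt : ∀ t ≥ T, (lam + q / 2) / t ≤ α / t ^ θ)
    (hint : IntegrableOn (fun t : ℝ => t ^ p * ‖g t‖) (Set.Ici T)) :
    ∃ C > 0, ∀ t ≥ T, ‖x' t‖ ≤ C * t ^ (-p) := by
  have hr0 : 0 < r := by rw [hr]; linarith
  have hγ2' : 0 < γ - 2 := by linarith
  have hp0 : 0 < p := by rw [hp]; positivity
  have hl0 : 0 < lam := by
    have : 0 < lam * γ := by rw [hlam]; linarith
    exact pos_of_mul_pos_left this (by linarith)
  have hq0 : 0 < q := by rw [hq]; linarith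
  have h2r : -(2 * r) = -(1 + θ) := by rw [hr]; ring
  have hP2 : ∀ t ≥ T, (t⁻¹) ^ 2 ≤ t ^ (-(2 * r)) := by
    intro t ht
    have ht1 : 1 ≤ t := hT.trans ht
    have : (t⁻¹) ^ 2 = t ^ (-2 : ℝ) := by
      rw [Real.rpow_neg (by linarith), inv_pow]; norm_cast
    rw [this]
    apply Real.rpow_le_rpow_of_exponent_le ht1
    rw [hr]; linarith
  -- the remainder term
  obtain ⟨D1, hD1, hD1δ, hbad⟩ : ∃ D1, 0 ≤ D1 ∧ δ * (D1 / δ) = D1 ∧ ∀ t ≥ T,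
      -((lam * γ - q) / t) * (F (x t) - Fs)
        + (α * lam * (q - 1 - θ) * (t ^ (-(1 + θ)) / t) + lam * (1 - q) * (q - 2) * (t⁻¹) ^ 3) / 2
            * ‖x t - z‖ ^ 2 ≤ D1 * t ^ (-(2 * p)) / t := by
    have hlq : lam * γ - q = δ := by rw [hlam, hq]; ring
    rcases hδ with hδ | ⟨h1, h2⟩
    · set D := (α * lam * (q + 1 + θ) + lam * (1 + q) * (q + 2)) / 2 with hD
      have hD0 : 0 ≤ D := by positivity
      obtain ⟨C, hC, hY⟩ := young_aux_s10 K γ r hK hγ2 D δ hD0 hδ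
      refine ⟨C, hC, by field_simp, fun t ht => ?_⟩
      have ht0 : 0 < t := by linarith
      have := hY t ‖x t - z‖ (F (x t) - Fs) ht0 (norm_nonneg _) (hH2 t ht)
      rw [← hp] at this
      have hP := hP2 t ht
      rw [hlq]
      have hk : (α * lam * (q - 1 - θ) * (t ^ (-(1 + θ)) / t) + lam * (1 - q) * (q - 2) * (t⁻¹) ^ 3) / 2
          ≤ D * t ^ (-(2 * r)) * t⁻¹ := by
        rw [← h2r]
        have hPp : 0 < t ^ (-(2 * r)) := Real.rpow_pos_of_pos ht0 _
        have hs : 0 < t⁻¹ := inv_pos.2 ht0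
        rw [div_eq_mul_inv _ t]
        generalize t ^ (-(2 * r)) = P at *
        generalize t⁻¹ = s at *
        have a1 : α * lam * (q - 1 - θ) ≤ α * lam * (q + 1 + θ) := by gcongr; linarith
        have a2 : lam * (1 - q) * (q - 2) ≤ lam * (1 + q) * (q + 2) := by
          rw [mul_assoc, mul_assoc]
          exact mul_le_mul_of_nonneg_left (by nlinarith [sq_nonneg q]) hl0.le
        have b1 : α * lam * (q - 1 - θ) * (P * s) ≤ α * lam * (q + 1 + θ) * (P * s) := by gcongr
        have b2 : lam * (1 - q) * (q - 2) * s ^ 3 ≤ lam * (1 + q) * (q + 2) * (P * s) := by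
          calc _ ≤ lam * (1 + q) * (q + 2) * s ^ 3 := by gcongr
            _ = lam * (1 + q) * (q + 2) * (s ^ 2 * s) := by ring
            _ ≤ _ := by gcongr
        rw [hD]; linarith
      calc _ ≤ -(δ / t) * (F (x t) - Fs) + (D * t ^ (-(2 * r)) * t⁻¹) * ‖x t - z‖ ^ 2 := by gcongr
        _ = (D * (t ^ (-(2 * r)) * ‖x t - z‖ ^ 2) - δ * (F (x t) - Fs)) / t := by
          field_simp; ring
        _ ≤ _ := by gcongr; linarith
    · refine ⟨0, le_rfl, by simp, fun t ht => ?_⟩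
      have ht0 : 0 < t := by linarith
      have hf0 : 0 ≤ F (x t) - Fs := le_trans (by positivity) (hH2 t ht)
      have hP : t ^ (-(1 + θ)) = t⁻¹ ^ 2 := by
        rw [h1, Real.rpow_neg ht0.le, inv_pow]; norm_num
      have : (α * lam * (q - 1 - θ) * (t ^ (-(1 + θ)) / t) + lam * (1 - q) * (q - 2) * (t⁻¹) ^ 3) = 0 := by
        rw [hP, h2, h1]; ring
      rw [this, hlq]
      have : 0 ≤ δ / t * (F (x t) - Fs) := by positivity
      simp only [zero_div, zero_mul, add_zero]; linarith
  -- lower bound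
  set D2 := lam ^ 2 + (α * lam + lam * (1 + q)) / 2 with hD2
  have hD20 : 0 ≤ D2 := by positivity
  obtain ⟨C0, hC0, hY0⟩ := young_aux_s10 K γ r hK hγ2 D2 (1/2) hD20 (by norm_num)
  set G := lyapG F Fs z x x' α θ lam q with hG
  have hlow : ∀ t ≥ T, (lam / t) ^ 2 * ‖x t - z‖ ^ 2 ≤ 1 / 2 * (F (x t) - Fs) + C0 * t ^ (-(2 * p)) ∧
      1 / 2 * (F (x t) - Fs) + 1 / 4 * ‖x' t‖ ^ 2 ≤ G t + C0 * t ^ (-(2 * p)) := by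
    intro t ht
    have ht0 : 0 < t := by linarith
    have hY := hY0 t ‖x t - z‖ (F (x t) - Fs) ht0 (norm_nonneg _) (hH2 t ht)
    rw [← hp] at hY
    have hP := hP2 t ht
    have hPp : 0 < t ^ (-(2 * r)) := Real.rpow_pos_of_pos ht0 _
    have hs : 0 < t⁻¹ := inv_pos.2 ht0
    have hcs : -(‖x' t‖ * ‖x t - z‖) ≤ ⟪x' t, x t - z⟫ :=
      neg_le_of_abs_le (abs_real_inner_le_norm _ _)
    simp only [hG, lyapG, real_inner_self_eq_norm_sq]
    rw [← h2r, div_eq_mul_inv]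
    have hn := norm_nonneg (x t - z)
    generalize t ^ (-(2 * p)) = P2 at *
    generalize t ^ (-(2 * r)) = P at *
    generalize t⁻¹ = s at *
    generalize ‖x t - z‖ = d at *
    generalize ‖x' t‖ = v at *
    generalize ⟪x' t, x t - z⟫ = vd at *
    generalize F (x t) - Fs = f at *
    have m1 : lam ^ 2 * s ^ 2 * d ^ 2 ≤ lam ^ 2 * P * d ^ 2 := by gcongr
    have m2 : 0 ≤ (α * lam + lam * (1 + q)) / 2 * P * d ^ 2 := by positivity
    have m3 : lam * (q - 1) * s ^ 2 * d ^ 2 ≤ lam * (1 + q) * P * d ^ 2 := by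
      calc _ ≤ lam * (1 + q) * s ^ 2 * d ^ 2 := by gcongr; linarith
        _ ≤ _ := by gcongr
    have m4 : 0 ≤ α * lam * P * d ^ 2 := by positivity
    have m5 := mul_le_mul_of_nonneg_left hcs (mul_pos hl0 hs).le
    have m6 := sq_nonneg (v / 2 - lam * s * d)
    rw [hD2] at hY
    constructor
    · linarith
    · linarith
  have hp2 : ∀ t ≥ T, t ^ (2 * p) * t ^ (-(2 * p)) = 1 := by
    intro t ht
    have ht0 : 0 < t := by linarith
    rw [← Real.rpow_add ht0]; simp
  have hpp : ∀ t ≥ T, t ^ (2 * p) = t ^ p * t ^ p := by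
    intro t ht
    have ht0 : 0 < t := by linarith
    rw [← Real.rpow_add ht0]; ring_nf
  have hlow2 : ∀ t ≥ T, (t ^ p * (lam / t * ‖x t - z‖)) ^ 2 ≤ t ^ (2 * p) * G t + 2 * C0 ∧
      (t ^ p * ‖x' t‖) ^ 2 ≤ 4 * (t ^ (2 * p) * G t + C0) := by
    intro t ht
    have ht0 : 0 < t := by linarith
    obtain ⟨h1, h2⟩ := hlow t ht
    have hf0 : 0 ≤ F (x t) - Fs := le_trans (by positivity) (hH2 t ht)
    have e := hp2 t ht
    have e2 := hpp t ht
    have hpos : 0 < t ^ (2 * p) := Real.rpow_pos_of_pos ht0 _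
    have h1' : t ^ (2 * p) * ((lam / t) ^ 2 * ‖x t - z‖ ^ 2)
        ≤ t ^ (2 * p) * (G t + 2 * (C0 * t ^ (-(2 * p)))) := by
      apply mul_le_mul_of_nonneg_left _ hpos.le
      have := sq_nonneg ‖x' t‖
      linarith
    have h2' : t ^ (2 * p) * (1 / 4 * ‖x' t‖ ^ 2)
        ≤ t ^ (2 * p) * (G t + C0 * t ^ (-(2 * p))) := by
      apply mul_le_mul_of_nonneg_left _ hpos.le
      linarith
    constructor
    · calc _ = t ^ (2 * p) * ((lam / t) ^ 2 * ‖x t - z‖ ^ 2) := by rw [e2]; ring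
        _ ≤ _ := h1'
        _ = t ^ (2 * p) * G t + 2 * C0 * (t ^ (2 * p) * t ^ (-(2 * p))) := by ring
        _ = _ := by rw [e]; ring
    · calc _ = 4 * (t ^ (2 * p) * (1 / 4 * ‖x' t‖ ^ 2)) := by rw [e2]; ring
        _ ≤ 4 * (t ^ (2 * p) * (G t + C0 * t ^ (-(2 * p)))) := by linarith
        _ = 4 * (t ^ (2 * p) * G t + C0 * (t ^ (2 * p) * t ^ (-(2 * p)))) := by ring
        _ = _ := by rw [e]; ring
  have hder : ∀ t ≥ T, ∃ U', HasDerivAt (fun t => t ^ (2 * p) * G t + C0) U' t ∧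
      U' ≤ -(δ / t) * ((t ^ (2 * p) * G t + C0) - (C0 + D1 / δ))
        + (2 + C0) * (t ^ p * ‖g t‖) * (1 + (t ^ (2 * p) * G t + C0)) := by
    intro t ht
    have ht0 : 0 < t := by linarith
    obtain ⟨G', hG', hle⟩ := lyapG_deriv F Fs z hdiff x x' x'' g α θ lam q γ t ht0 hl0.le
      (hx t ht) (hx' t ht) (hode t ht) (hγ t ht) (hαt t ht)
    have h1 : HasDerivAt (fun t : ℝ => t ^ (2 * p)) (2 * p * t ^ (2 * p - 1)) t :=
      Real.hasDerivAt_rpow_const (Or.inl ht0.ne')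
    refine ⟨_, (h1.mul hG').add_const C0, ?_⟩
    have h3 : t ^ (2 * p - 1) = t ^ (2 * p) / t := by rw [Real.rpow_sub ht0, Real.rpow_one]
    rw [h3]
    have hb := hbad t ht
    obtain ⟨l1, l2⟩ := hlow2 t ht
    have e := hp2 t ht
    have e2 := hpp t ht
    have hpos : 0 < t ^ (2 * p) := Real.rpow_pos_of_pos ht0 _
    have hpos' : 0 < t ^ p := Real.rpow_pos_of_pos ht0 _
    have hsum : t ^ p * (‖x' t‖ + lam / t * ‖x t - z‖) ≤ (2 + C0) * (1 + (t ^ (2 * p) * G t + C0)) := by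
      have hu : 0 ≤ t ^ (2 * p) * G t + C0 := by
        have := sq_nonneg (t ^ p * ‖x' t‖)
        linarith
      have n1 := sq_nonneg (t ^ p * ‖x' t‖ - 2)
      have n2 := sq_nonneg (t ^ p * (lam / t * ‖x t - z‖) - 2)
      have n3 := mul_nonneg hC0 hu
      linarith
    have hG1 : G' ≤ -(q / t) * G t + D1 * t ^ (-(2 * p)) / t + ‖g t‖ * (‖x' t‖ + lam / t * ‖x t - z‖) := by
      linarith
    have hgs := mul_le_mul_of_nonneg_left hsum (mul_nonneg hpos'.le (norm_nonneg (g t)))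
    calc 2 * p * (t ^ (2 * p) / t) * G t + t ^ (2 * p) * G'
        ≤ 2 * p * (t ^ (2 * p) / t) * G t + t ^ (2 * p) * (-(q / t) * G t
          + D1 * t ^ (-(2 * p)) / t + ‖g t‖ * (‖x' t‖ + lam / t * ‖x t - z‖)) := by gcongr
      _ = -(δ / t) * (t ^ (2 * p) * G t) + D1 * (t ^ (2 * p) * t ^ (-(2 * p))) / t
          + t ^ (2 * p) * (‖g t‖ * (‖x' t‖ + lam / t * ‖x t - z‖)) := by rw [hq]; ring
      _ = -(δ / t) * (t ^ (2 * p) * G t) + (δ * (D1 / δ)) / t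
          + t ^ p * ‖g t‖ * (t ^ p * (‖x' t‖ + lam / t * ‖x t - z‖)) := by rw [e, e2, hD1δ]; ring
      _ ≤ -(δ / t) * (t ^ (2 * p) * G t) + (δ * (D1 / δ)) / t
          + t ^ p * ‖g t‖ * ((2 + C0) * (1 + (t ^ (2 * p) * G t + C0))) := by linarith
      _ = _ := by ring
  obtain ⟨B, hB, hBu⟩ := gronwall_bdd (fun t => t ^ (2 * p) * G t + C0)
    (deriv (fun t => t ^ (2 * p) * G t + C0)) (fun t => (2 + C0) * (t ^ p * ‖g t‖)) T δ (C0 + D1 / δ)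
    (by linarith) hδ0 (by positivity)
    (by
      refine continuousOn_const.mul (ContinuousOn.mul ?_ hgc.norm)
      exact fun t ht => (Real.continuousAt_rpow_const _ _ (Or.inr hp0.le)).continuousWithinAt)
    (fun t ht => by
      have : 0 < t := by linarith
      positivity)
    (hint.const_mul _)
    (fun t ht => by
      obtain ⟨U', h, _⟩ := hder t ht
      exact h.differentiableAt.hasDerivAt)
    (fun t ht => by
      obtain ⟨U', h, h'⟩ := hder t ht
      rw [h.deriv]; exact h')
  refine ⟨2 * Real.sqrt B, by positivity, fun t ht => ?_⟩
  have ht0 : 0 < t := by linarith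
  have hpos' : 0 < t ^ p := Real.rpow_pos_of_pos ht0 _
  have h1 := hBu t ht
  have h2 := (hlow2 t ht).2
  have h3 : t ^ p * ‖x' t‖ ≤ 2 * Real.sqrt B := by
    refine (le_abs_self _).trans (abs_le_of_sq_le_sq ?_ (by positivity))
    rw [mul_pow 2, Real.sq_sqrt hB.le]; linarith
  rw [Real.rpow_neg ht0.le, ← div_eq_mul_inv, le_div_iff₀ hpos']
  linarith

lemma lyapG_step1 {H : Type*} [NormedAddCommGroup H] [InnerProductSpace ℝ H] [CompleteSpace H]
    (F : H → ℝ) (Fs : ℝ) (z : H) (hdiff : Differentiable ℝ F)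
    (x x' x'' g : ℝ → H) (α θ T : ℝ) (hα : 0 < α) (hT : 1 ≤ T)
    (hgc : ContinuousOn g (Set.Ici T))
    (hx : ∀ t ≥ T, HasDerivAt x (x' t) t) (hx' : ∀ t ≥ T, HasDerivAt x' (x'' t) t)
    (hode : ∀ t ≥ T, x'' t + (α / t ^ θ) • x' t + gradient F (x t) = g t)
    (hf : ∀ t ≥ T, 0 ≤ F (x t) - Fs)
    (hγ : ∀ t ≥ T, 1 * (F (x t) - Fs) ≤ ⟪gradient F (x t), x t - z⟫)
    (hint : IntegrableOn (fun t : ℝ => ‖g t‖) (Set.Ici T)) :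
    ∃ B > 0, ∀ t ≥ T, F (x t) - Fs + 1 / 2 * ‖x' t‖ ^ 2 ≤ B := by
  have hder : ∀ t ≥ T, ∃ U', HasDerivAt (lyapG F Fs z x x' α θ 0 0) U' t ∧
      U' ≤ -(0 / t) * (lyapG F Fs z x x' α θ 0 0 t - 0)
        + ‖g t‖ * (1 + lyapG F Fs z x x' α θ 0 0 t) := by
    intro t ht
    have ht0 : 0 < t := by linarith
    obtain ⟨G', hG', hle⟩ := lyapG_deriv F Fs z hdiff x x' x'' g α θ 0 0 1 t ht0 le_rfl
      (hx t ht) (hx' t ht) (hode t ht) (hγ t ht) (by simp only [zero_div, add_zero]; positivity)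
    refine ⟨G', hG', ?_⟩
    simp only [lyapG, real_inner_self_eq_norm_sq, zero_mul, mul_zero, zero_div, add_zero, sub_zero,
      neg_zero, zero_add] at hle ⊢
    refine hle.trans ?_
    gcongr
    nlinarith [sq_nonneg (‖x' t‖ - 1), hf t ht]
  obtain ⟨B, hB, hBu⟩ := gronwall_bdd (lyapG F Fs z x x' α θ 0 0)
    (deriv (lyapG F Fs z x x' α θ 0 0)) (fun t => ‖g t‖) T 0 0
    (by linarith) le_rfl le_rfl hgc.norm (fun t ht => norm_nonneg _) hint
    (fun t ht => by
      obtain ⟨U', h, _⟩ := hder t ht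
      exact h.differentiableAt.hasDerivAt)
    (fun t ht => by
      obtain ⟨U', h, h'⟩ := hder t ht
      rw [h.deriv]; exact h')
  refine ⟨B, hB, fun t ht => ?_⟩
  have := hBu t ht
  simpa only [lyapG, real_inner_self_eq_norm_sq, zero_mul, mul_zero, zero_div, add_zero] using this

lemma lyapG_step2 {H : Type*} [NormedAddCommGroup H] [InnerProductSpace ℝ H] [CompleteSpace H]
    (F : H → ℝ) (Fs : ℝ) (z : H) (hdiff : Differentiable ℝ F)
    (x x' x'' g : ℝ → H) (α θ p T R V : ℝ) (hα : 0 < α) (hT : 1 ≤ T) (hθ : 0 ≤ θ) (hθ1 : θ ≤ 1)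
    (hp : 0 < p) (hR : 0 ≤ R) (hV : 0 ≤ V)
    (hgc : ContinuousOn g (Set.Ici T))
    (hx : ∀ t ≥ T, HasDerivAt x (x' t) t) (hx' : ∀ t ≥ T, HasDerivAt x' (x'' t) t)
    (hode : ∀ t ≥ T, x'' t + (α / t ^ θ) • x' t + gradient F (x t) = g t)
    (hf : ∀ t ≥ T, 0 ≤ F (x t) - Fs)
    (hγ : ∀ t ≥ T, 1 * (F (x t) - Fs) ≤ ⟪gradient F (x t), x t - z⟫)
    (hdR : ∀ t ≥ T, ‖x t - z‖ ≤ R) (hvV : ∀ t ≥ T, ‖x' t‖ ≤ V)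
    (hint : IntegrableOn (fun t : ℝ => t ^ p * ‖g t‖) (Set.Ici T)) (e : ℝ) (he : 0 < e) :
    ∃ T2 ≥ T, ∀ t ≥ T2, F (x t) - Fs < e := by
  obtain ⟨q, hq0, hq1, hqp, hqα⟩ : ∃ q : ℝ, 0 < q ∧ q ≤ 1 / 2 ∧ q ≤ p ∧ 3 / 2 * q ≤ α := by
    refine ⟨min (1 / 2) (min p (2 / 3 * α)), by positivity, min_le_left _ _,
      (min_le_right _ _).trans (min_le_left _ _), ?_⟩
    have := (min_le_right (1 / 2) (min p (2 / 3 * α))).trans (min_le_right _ _)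
    linarith
  set G := lyapG F Fs z x x' α θ q q with hG
  set C2 := q * (V * R) with hC2
  have hC20 : 0 ≤ C2 := by positivity
  have hlow : ∀ t ≥ T, t ^ q * (F (x t) - Fs) ≤ t ^ q * G t + C2 := by
    intro t ht
    have ht1 : 1 ≤ t := hT.trans ht
    have ht0 : 0 < t := by linarith
    have hs : 0 < t⁻¹ := inv_pos.2 ht0
    have hcs : -(‖x' t‖ * ‖x t - z‖) ≤ ⟪x' t, x t - z⟫ :=
      neg_le_of_abs_le (abs_real_inner_le_norm _ _)
    have hvr : ‖x' t‖ * ‖x t - z‖ ≤ V * R :=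
      mul_le_mul (hvV t ht) (hdR t ht) (norm_nonneg _) hV
    have h1 : F (x t) - Fs ≤ G t + C2 * t⁻¹ := by
      simp only [hG, lyapG, real_inner_self_eq_norm_sq]
      have hc : 0 ≤ (α * q * t ^ (-(1 + θ)) + q * (1 - q) * (t⁻¹) ^ 2) / 2 * ‖x t - z‖ ^ 2 := by
        have : 0 ≤ 1 - q := by linarith
        positivity
      have m := mul_le_mul_of_nonneg_left (show -(V * R) ≤ ⟪x' t, x t - z⟫ by linarith)
        (mul_pos hq0 hs).le
      have := sq_nonneg ‖x' t‖
      rw [hC2]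
      linarith
    have hle : t ^ q * t⁻¹ ≤ 1 := by
      rw [← div_eq_mul_inv, div_le_one ht0]
      calc t ^ q ≤ t ^ (1 : ℝ) := Real.rpow_le_rpow_of_exponent_le ht1 (by linarith)
        _ = t := Real.rpow_one t
    have hpos : 0 < t ^ q := Real.rpow_pos_of_pos ht0 _
    calc t ^ q * (F (x t) - Fs) ≤ t ^ q * (G t + C2 * t⁻¹) := by gcongr
      _ = t ^ q * G t + C2 * (t ^ q * t⁻¹) := by ring
      _ ≤ t ^ q * G t + C2 * 1 := by gcongr
      _ = _ := by ring
  have hder : ∀ t ≥ T, ∃ U', HasDerivAt (fun t => t ^ q * G t + C2) U' t ∧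
      U' ≤ -(0 / t) * ((t ^ q * G t + C2) - 0)
        + (V + q * R) * (t ^ p * ‖g t‖) * (1 + (t ^ q * G t + C2)) := by
    intro t ht
    have ht1 : 1 ≤ t := hT.trans ht
    have ht0 : 0 < t := by linarith
    have hθt : t ^ θ ≤ t := by
      calc t ^ θ ≤ t ^ (1 : ℝ) := Real.rpow_le_rpow_of_exponent_le ht1 hθ1
        _ = t := Real.rpow_one t
    obtain ⟨G', hG', hle⟩ := lyapG_deriv F Fs z hdiff x x' x'' g α θ q q 1 t ht0 hq0.le
      (hx t ht) (hx' t ht) (hode t ht) (hγ t ht) (by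
        calc (q + q / 2) / t ≤ α / t := by gcongr; linarith
          _ ≤ _ := by gcongr)
    have h1 : HasDerivAt (fun t : ℝ => t ^ q) (q * t ^ (q - 1)) t :=
      Real.hasDerivAt_rpow_const (Or.inl ht0.ne')
    refine ⟨_, (h1.mul hG').add_const C2, ?_⟩
    have h3 : t ^ (q - 1) = t ^ q / t := by rw [Real.rpow_sub ht0, Real.rpow_one]
    rw [h3]
    have hpos : 0 < t ^ q := Real.rpow_pos_of_pos ht0 _
    have hk : (α * q * (q - 1 - θ) * (t ^ (-(1 + θ)) / t) + q * (1 - q) * (q - 2) * (t⁻¹) ^ 3) / 2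
            * ‖x t - z‖ ^ 2 ≤ 0 := by
      have k1 : 0 ≤ α * q * (1 + θ - q) * (t ^ (-(1 + θ)) / t) := by
        have : 0 ≤ 1 + θ - q := by linarith
        positivity
      have k2 : 0 ≤ q * (1 - q) * (2 - q) * (t⁻¹) ^ 3 := by
        have : 0 ≤ 1 - q := by linarith
        have : 0 ≤ 2 - q := by linarith
        positivity
      apply mul_nonpos_of_nonpos_of_nonneg _ (by positivity)
      linarith
    have hs : ‖x' t‖ + q / t * ‖x t - z‖ ≤ V + q * R := by
      have : q / t ≤ q := div_le_self hq0.le ht1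
      have := hvV t ht
      have := hdR t ht
      gcongr
    have hu : 0 ≤ t ^ q * G t + C2 := by
      have := hlow t ht
      have := mul_nonneg hpos.le (hf t ht)
      linarith
    have hG1 : G' + q / t * G t ≤ ‖g t‖ * (V + q * R) := by
      have := mul_le_mul_of_nonneg_left hs (norm_nonneg (g t))
      simp only [mul_one, sub_self, zero_div, neg_zero, zero_mul, zero_add] at hle
      linarith
    have htp : t ^ q ≤ t ^ p := Real.rpow_le_rpow_of_exponent_le ht1 hqp
    calc q * (t ^ q / t) * G t + t ^ q * G' = t ^ q * (G' + q / t * G t) := by ring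
      _ ≤ t ^ q * (‖g t‖ * (V + q * R)) := by gcongr
      _ ≤ t ^ p * (‖g t‖ * (V + q * R)) := by gcongr
      _ = (V + q * R) * (t ^ p * ‖g t‖) * (1 + 0) := by ring
      _ ≤ (V + q * R) * (t ^ p * ‖g t‖) * (1 + (t ^ q * G t + C2)) := by gcongr
      _ = _ := by ring
  obtain ⟨B, hB, hBu⟩ := gronwall_bdd (fun t => t ^ q * G t + C2)
    (deriv (fun t => t ^ q * G t + C2)) (fun t => (V + q * R) * (t ^ p * ‖g t‖)) T 0 0
    (by linarith) le_rfl le_rfl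
    (by
      refine continuousOn_const.mul (ContinuousOn.mul ?_ hgc.norm)
      exact fun t ht => (Real.continuousAt_rpow_const _ _ (Or.inr hp.le)).continuousWithinAt)
    (fun t ht => by
      have : 0 < t := by linarith
      positivity)
    (hint.const_mul _)
    (fun t ht => by
      obtain ⟨U', h, _⟩ := hder t ht
      exact h.differentiableAt.hasDerivAt)
    (fun t ht => by
      obtain ⟨U', h, h'⟩ := hder t ht
      rw [h.deriv]; exact h')
  obtain ⟨N, hN⟩ := Filter.eventually_atTop.1 ((tendsto_rpow_atTop hq0).eventually_gt_atTop (B / e))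
  refine ⟨max T N, le_max_left _ _, fun t ht => ?_⟩
  have htT : T ≤ t := (le_max_left _ _).trans ht
  have h1 := hN t ((le_max_right _ _).trans ht)
  have h2 := hlow t htT
  have h3 := hBu t htT
  have ht0 : 0 < t := by linarith
  have hpos : 0 < t ^ q := Real.rpow_pos_of_pos ht0 _
  rw [div_lt_iff₀ he] at h1
  have : t ^ q * (F (x t) - Fs) < t ^ q * e := by linarith
  exact lt_of_mul_lt_mul_left this hpos.le

theorem stmt_10
    {n : ℕ} (hn : 1 ≤ n)
    (F : EuclideanSpace ℝ (Fin n) → ℝ) (Fstar : ℝ)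
    (Xstar : Set (EuclideanSpace ℝ (Fin n)))
    (hXstar : Xstar = {z | ∀ y, F z ≤ F y})
    (hne : Xstar.Nonempty)
    (hFstar : ∀ z ∈ Xstar, F z = Fstar)
    (hconv : ConvexOn ℝ Set.univ F)
    (hdiff : Differentiable ℝ F)
    (α t₀ θ γ r : ℝ) (hα : 0 < α) (ht₀ : 0 < t₀) (hθ : 0 ≤ θ) (hθ1 : θ ≤ 1)
    (hγ : 2 < γ) (hr : r = (1 + θ) / 2)
    (g x x' x'' : ℝ → EuclideanSpace ℝ (Fin n))
    (hg : ContinuousOn g (Set.Ici t₀))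
    (hx : ∀ t ∈ Set.Ici t₀, HasDerivAt x (x' t) t)
    (hx'd : ∀ t ∈ Set.Ici t₀, HasDerivAt x' (x'' t) t)
    (hx''c : ContinuousOn x'' (Set.Ici t₀))
    (hode : ∀ t ∈ Set.Ici t₀, x'' t + (α / t ^ θ) • x' t + gradient F (x t) = g t)
    (hH1 : ∀ z ∈ Xstar, ∃ η > 0, ∀ y : EuclideanSpace ℝ (Fin n),
      ‖y - z‖ < η → F y - Fstar ≤ (1 / γ) * ⟪gradient F y, y - z⟫)
    (hH2 : ∀ z ∈ Xstar, ∃ K > 0, ∃ ε > 0, ∀ y : EuclideanSpace ℝ (Fin n),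
      ‖y - z‖ < ε → K * Metric.infDist y Xstar ^ (γ : ℝ) ≤ F y - Fstar)
    (huniq : ∃ z, Xstar = {z})
    (hint : IntegrableOn (fun t : ℝ => t ^ (r * γ / (γ - 2)) * ‖g t‖) (Set.Ici t₀))
    (hcase : (θ = 1 ∧ (γ + 2) / (γ - 2) ≤ α) ∨ θ < 1) :
    ∃ C > 0, ∃ t₁ ≥ t₀, ∀ t ≥ t₁,
      ‖x' t‖ ≤ C * t ^ (-(r * γ / (γ - 2))) := by
  obtain ⟨z, hz⟩ := huniq
  have hzX : z ∈ Xstar := by rw [hz]; exact Set.mem_singleton z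
  have hzmin : ∀ y, F z ≤ F y := by
    have := hzX
    rw [hXstar] at this; exact this
  have hFz : F z = Fstar := hFstar z hzX
  have hf : ∀ y, 0 ≤ F y - Fstar := fun y => by rw [← hFz]; exact sub_nonneg.2 (hzmin y)
  obtain ⟨η, hη, hη'⟩ := hH1 z hzX
  obtain ⟨K, hK, ε, hε, hε'⟩ := hH2 z hzX
  have hinf : ∀ y, Metric.infDist y Xstar = ‖y - z‖ := fun y => by
    rw [hz, Metric.infDist_singleton, dist_eq_norm]
  simp only [hinf] at hε'
  have hr0 : 0 < r := by rw [hr]; linarith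
  have hγ2' : 0 < γ - 2 := by linarith
  obtain ⟨p, hp⟩ : ∃ p, p = r * γ / (γ - 2) := ⟨_, rfl⟩
  have hp0 : 0 < p := by rw [hp]; positivity
  rw [← hp] at hint ⊢
  have hpγ : p * (γ - 2) = r * γ := by rw [hp]; field_simp
  -- coercivity
  obtain ⟨ρ, hρ, hρη, hρε⟩ : ∃ ρ, 0 < ρ ∧ ρ < η ∧ ρ < ε := by
    refine ⟨min η ε / 2, by positivity, ?_, ?_⟩
    · have := min_le_left η ε
      linarith
    · have := min_le_right η ε
      linarith
  obtain ⟨m, hm⟩ : ∃ m, m = K * ρ ^ γ := ⟨_, rfl⟩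
  have hm0 : 0 < m := by rw [hm]; positivity
  have hco := coercive F hconv z ρ m hρ (fun y hy => by
    have := hε' y (by rw [hy]; exact hρε)
    rw [hy] at this; rw [hm, hFz]; exact this)
  rw [hFz] at hco
  -- step 1
  obtain ⟨T, hTdef⟩ : ∃ T, T = max t₀ 1 := ⟨_, rfl⟩
  have hTt₀ : t₀ ≤ T := by rw [hTdef]; exact le_max_left _ _
  have hT1 : 1 ≤ T := by rw [hTdef]; exact le_max_right _ _
  have hsub : ∀ S, T ≤ S → Set.Ici S ⊆ Set.Ici t₀ := fun S hS => Set.Ici_subset_Ici.2 (hTt₀.trans hS)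
  have hmem : ∀ S, T ≤ S → ∀ t ≥ S, t ∈ Set.Ici t₀ := fun S hS t ht => hsub S hS ht
  have hintT := hint.mono_set (hsub T le_rfl)
  have hgT := hg.mono (hsub T le_rfl)
  have hgi : IntegrableOn (fun t : ℝ => ‖g t‖) (Set.Ici T) := by
    refine Integrable.mono' hintT (hgT.norm.aestronglyMeasurable measurableSet_Ici) ?_
    refine (ae_restrict_mem measurableSet_Ici).mono (fun t ht => ?_)
    rw [norm_norm]
    have : 1 ≤ t ^ p := Real.one_le_rpow (hT1.trans ht) hp0.le
    exact le_mul_of_one_le_left (norm_nonneg _) this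
  have hcx : ∀ t ≥ T, 1 * (F (x t) - Fstar) ≤ ⟪gradient F (x t), x t - z⟫ := fun t ht => by
    rw [one_mul, ← hFz]; exact convex_grad F hdiff hconv _ _
  obtain ⟨B, hB, hBE⟩ := lyapG_step1 F Fstar z hdiff x x' x'' g α θ T hα hT1 hgT
    (fun t ht => hx t (hmem T le_rfl t ht)) (fun t ht => hx'd t (hmem T le_rfl t ht))
    (fun t ht => hode t (hmem T le_rfl t ht)) (fun t ht => hf _) hcx hgi
  -- step 2
  obtain ⟨T2, hT2, hfm⟩ := lyapG_step2 F Fstar z hdiff x x' x'' g α θ p T (ρ + ρ * B / m) (1 + B)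
    hα hT1 hθ hθ1 hp0 (by positivity) (by positivity) hgT
    (fun t ht => hx t (hmem T le_rfl t ht)) (fun t ht => hx'd t (hmem T le_rfl t ht))
    (fun t ht => hode t (hmem T le_rfl t ht)) (fun t ht => hf _) hcx
    (fun t ht => by
      have h1 := hBE t ht
      have h2 : 0 ≤ ρ * B / m := by positivity
      by_cases h : ρ ≤ ‖x t - z‖
      · have h3 := hco (x t) h
        have h4 : ‖x t - z‖ ≤ ρ * B / m := by
          rw [le_div_iff₀ hm0]
          have h5 : ρ * (F (x t) - Fstar) ≤ ρ * B := by
            apply mul_le_mul_of_nonneg_left _ hρ.le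
            have := sq_nonneg ‖x' t‖
            linarith
          linarith
        linarith
      · linarith)
    (fun t ht => by
      have h1 := hBE t ht
      have := hf (x t)
      have := sq_nonneg (‖x' t‖ - 1)
      linarith)
    hintT m hm0
  have hclose : ∀ t ≥ T2, ‖x t - z‖ < ρ := by
    intro t ht
    by_contra h
    push Not at h
    have h1 := hco (x t) h
    have h2 := hfm t ht
    have h3 : m * ρ ≤ m * ‖x t - z‖ := by gcongr
    have h4 : ρ * (F (x t) - Fstar) < ρ * m := mul_lt_mul_of_pos_left h2 hρ
    linarith
  -- choice of parameters
  obtain ⟨δ, hδ0, hδ, T3, hαt⟩ : ∃ δ : ℝ, 0 ≤ δ ∧ (0 < δ ∨ (θ = 1 ∧ 2 * p + δ = α + 1)) ∧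
      ∃ T3, ∀ t ≥ max T2 T3, ((2 * p + 2 * δ) / γ + (2 * p + δ) / 2) / t ≤ α / t ^ θ := by
    rcases hcase with ⟨h1, h2⟩ | h1
    · have hr1 : r = 1 := by rw [hr, h1]; norm_num
      have hcrit : (γ + 2) / (γ - 2) = 2 * p / γ + p := by
        rw [hp, hr1]; field_simp; ring
      have hpc : 2 * p = (γ + 2) / (γ - 2) + 1 := by
        rw [hp, hr1]; field_simp; ring
      have hgen : ∀ δ : ℝ, (2 * p + 2 * δ) / γ + (2 * p + δ) / 2 ≤ α →
        ∀ t ≥ max T2 0, ((2 * p + 2 * δ) / γ + (2 * p + δ) / 2) / t ≤ α / t ^ θ := by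
        intro δ hδ t ht
        have : 0 < t := by
          have := (le_max_left _ _).trans ht
          linarith
        rw [h1, Real.rpow_one]; gcongr
      rcases h2.eq_or_lt with h3 | h3
      · refine ⟨0, le_rfl, Or.inr ⟨h1, by rw [add_zero, hpc, h3]⟩, 0, hgen 0 ?_⟩
        rw [← h3, hcrit]; apply le_of_eq; ring
      · have hk : 0 < 2 / γ + 1 / 2 := by positivity
        refine ⟨(α - (γ + 2) / (γ - 2)) / (2 / γ + 1 / 2), ?_, Or.inl ?_, 0, hgen _ ?_⟩
        · exact (div_pos (by linarith) hk).le
        · exact div_pos (by linarith) hk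
        · obtain ⟨δ, hδ⟩ : ∃ δ, δ = (α - (γ + 2) / (γ - 2)) / (2 / γ + 1 / 2) := ⟨_, rfl⟩
          rw [← hδ]
          rw [eq_div_iff hk.ne', hcrit] at hδ
          apply le_of_eq
          have : (2 * p + 2 * δ) / γ + (2 * p + δ) / 2 = δ * (2 / γ + 1 / 2) + (2 * p / γ + p) := by ring
          rw [this, hδ]; ring
    · refine ⟨1, zero_le_one, Or.inl one_pos, ?_⟩
      generalize ((2 * p + 2 * 1) / γ + (2 * p + 1) / 2) = k
      obtain ⟨N, hN⟩ := Filter.eventually_atTop.1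
        ((tendsto_rpow_atTop (show 0 < 1 - θ by linarith)).eventually_ge_atTop (k / α))
      refine ⟨N, fun t ht => ?_⟩
      have h2 := hN t ((le_max_right _ _).trans ht)
      have ht0 : 0 < t := by
        have := (le_max_left _ _).trans ht
        linarith
      have hpos : 0 < t ^ θ := Real.rpow_pos_of_pos ht0 _
      rw [Real.rpow_sub ht0, Real.rpow_one, div_le_div_iff₀ hα hpos] at h2
      rw [div_le_div_iff₀ ht0 hpos]
      linarith
  have hTS : T ≤ max T2 T3 := hT2.trans (le_max_left _ _)
  obtain ⟨C, hC, hfin⟩ := lyapG_step3 F Fstar z hdiff x x' x'' g α θ γ r p K (max T2 T3) δ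
    ((2 * p + 2 * δ) / γ) (2 * p + δ) hα (hT1.trans hTS) hθ hθ1 hγ hr hp hK hδ0 rfl (by field_simp) hδ
    (hg.mono (hsub _ hTS)) (fun t ht => hx t (hmem _ hTS t ht)) (fun t ht => hx'd t (hmem _ hTS t ht))
    (fun t ht => hode t (hmem _ hTS t ht))
    (fun t ht => by
      have h1 := hη' (x t) ((hclose t ((le_max_left _ _).trans ht)).trans hρη)
      rw [one_div, ← div_eq_inv_mul, le_div_iff₀ (by linarith)] at h1
      linarith)
    (fun t ht => hε' (x t) ((hclose t ((le_max_left _ _).trans ht)).trans hρε))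
    hαt (hint.mono_set (hsub _ hTS))
  exact ⟨C, hC, max T2 T3, hTt₀.trans hTS, hfin⟩
end

section
/- Let α > 0, θ ∈ [0,1], t₀ > 0 and γ > 2, and set r = (1 + θ)/2. Let x : [t₀, ∞) → ℝⁿ be a solution of the perturbed inertial ODE with damping α/t^θ. Assume that ∫_{t₀}^∞ t^{rγ/(γ − 2)} ‖g(t)‖ dt < ∞, that F satisfies hypotheses H1(γ) and H2(γ) and admits a unique minimizer, that either (θ = 1 and α ≥ (γ + 2)/(γ − 2)) or θ < 1, and additionally that rγ/(γ − 2) > 1. Then ∫_{t₀}^∞ ‖x'(t)‖ dt < ∞, i.e. the trajectory t ↦ x(t) has finite length. -/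
open MeasureTheory
open scoped RealInnerProductSpace

section helpers
set_option linter.unusedSectionVars false
variable {H : Type*} [NormedAddCommGroup H] [InnerProductSpace ℝ H] [CompleteSpace H]

lemma aux_anti (f f' : ℝ → ℝ) (T : ℝ) (hf : ∀ t, T ≤ t → HasDerivAt f (f' t) t)
    (h : ∀ t, T ≤ t → f' t ≤ 0) (s t : ℝ) (hs : T ≤ s) (hst : s ≤ t) : f t ≤ f s := by
  have : AntitoneOn f (Set.Ici T) := by
    apply antitoneOn_of_deriv_nonpos (convex_Ici T)
    · exact fun y hy => (hf y hy).continuousAt.continuousWithinAt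
    · exact fun y hy => (hf y (interior_subset hy)).differentiableAt.differentiableWithinAt
    · intro y hy
      rw [(hf y (interior_subset hy)).deriv]
      exact h y (interior_subset hy)
  exact this hs (hs.trans hst) hst

lemma aux_gronwall (f f' G φ : ℝ → ℝ) (T : ℝ) (hf : ∀ t, T ≤ t → HasDerivAt f (f' t) t)
    (hG : ∀ t, T ≤ t → HasDerivAt G (φ t) t)
    (h : ∀ t, T ≤ t → f' t ≤ φ t * f t) (t : ℝ) (hst : T ≤ t) :
    f t ≤ f T * Real.exp (G t - G T) := by
  have key := aux_anti (fun t => f t * Real.exp (-(G t)))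
    (fun t => f' t * Real.exp (-(G t)) + f t * (Real.exp (-(G t)) * (-(φ t)))) T
    (fun t ht => (hf t ht).mul ((hG t ht).neg.exp))
    (fun t ht => by
      have := mul_le_mul_of_nonneg_right (h t ht) (Real.exp_pos (-(G t))).le
      linarith) T t le_rfl hst
  have h2 := mul_le_mul_of_nonneg_right key (Real.exp_pos (G t)).le
  simp only [mul_assoc, ← Real.exp_add] at h2
  simpa [sub_eq_neg_add] using h2

lemma aux_grad (F : H → ℝ) (hconv : ConvexOn ℝ Set.univ F) (hdiff : Differentiable ℝ F)
    (y z : H) : F y - F z ≤ ⟪gradient F y, y - z⟫ := by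
  have hc : ConvexOn ℝ Set.univ (fun s : ℝ => F (AffineMap.lineMap y z s)) := by
    have := hconv.comp_affineMap (AffineMap.lineMap y z : ℝ →ᵃ[ℝ] H)
    exact this
  have hl : HasDerivAt (fun s : ℝ => AffineMap.lineMap y z s) (z - y) (0:ℝ) :=
    AffineMap.hasDerivAt_lineMap
  have hF : HasFDerivAt F _ (AffineMap.lineMap y z (0:ℝ)) :=
    (hdiff _).hasGradientAt.hasFDerivAt
  have hd := hF.comp_hasDerivAt (0:ℝ) hl
  have := hc.le_slope_of_hasDerivAt (Set.mem_univ 0) (Set.mem_univ 1) one_pos hd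
  simp [slope] at this
  have e : ⟪gradient F y, y - z⟫ = - ⟪gradient F y, z - y⟫ := by
    rw [← inner_neg_right, neg_sub]
  have hgr : ∀ w, ⟪gradient F y, w⟫ = fderiv ℝ F y w := fun w => by simp
  rw [e, inner_sub_right, hgr, hgr]; linarith

lemma aux_coer (F : H → ℝ) (hconv : ConvexOn ℝ Set.univ F) (z : H) (γ K δ : ℝ) (hδ : 0 < δ)
    (h : ∀ y, ‖y - z‖ = δ → K * δ ^ γ ≤ F y - F z) (y : H) (hy : δ ≤ ‖y - z‖) :
    K * δ ^ γ * ‖y - z‖ ≤ δ * (F y - F z) := by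
  have hp : 0 < ‖y - z‖ := hδ.trans_le hy
  set s := δ / ‖y - z‖ with hs
  have hs0 : 0 < s := by positivity
  have hs1 : s ≤ 1 := by rw [hs, div_le_one hp]; exact hy
  have h1 := hconv.2 (Set.mem_univ z) (Set.mem_univ y) (sub_nonneg.2 hs1) hs0.le (by ring)
  have h2 := h ((1 - s) • z + s • y) (by
    have : (1 - s) • z + s • y - z = s • (y - z) := by module
    rw [this, norm_smul, Real.norm_of_nonneg hs0.le, hs]; field_simp)
  simp only [smul_eq_mul] at h1
  have h3 : K * δ ^ γ ≤ s * (F y - F z) := by linarith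
  calc K * δ ^ γ * ‖y - z‖ ≤ s * (F y - F z) * ‖y - z‖ :=
        mul_le_mul_of_nonneg_right h3 hp.le
    _ = δ * (F y - F z) := by rw [hs]; field_simp

lemma aux_E (F : H → ℝ) (hdiff : Differentiable ℝ F) (c : ℝ) (x x' : ℝ → H) (x'' gt : H) (t a : ℝ)
    (hx : HasDerivAt x (x' t) t) (hx' : HasDerivAt x' x'' t)
    (hode : x'' + a • x' t + gradient F (x t) = gt) :
    HasDerivAt (fun t => (F (x t) - c) + ‖x' t‖ ^ 2 / 2) (-a * ‖x' t‖ ^ 2 + ⟪gt, x' t⟫) t := by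
  have h1 := (hdiff (x t)).hasGradientAt.hasFDerivAt.comp_hasDerivAt t hx
  have h2 := (hx'.norm_sq).div_const 2
  refine ((h1.sub_const c).add h2).congr_deriv ?_
  rw [← hode]
  simp [inner_add_left, inner_smul_left]
  rw [real_inner_comm x'' (x' t)]
  ring

lemma aux_b (F : H → ℝ) (z : H) (x x' : ℝ → H) (x'' gt : H) (t a : ℝ)
    (hx : HasDerivAt x (x' t) t) (hx' : HasDerivAt x' x'' t)
    (hode : x'' + a • x' t + gradient F (x t) = gt) :
    HasDerivAt (fun t => ⟪x t - z, x' t⟫) (‖x' t‖ ^ 2 - a * ⟪x t - z, x' t⟫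
      - ⟪gradient F (x t), x t - z⟫ + ⟪gt, x t - z⟫) t := by
  refine ((hx.sub_const z).inner ℝ hx').congr_deriv ?_
  rw [← hode]
  simp only [inner_add_left, inner_smul_left]
  rw [real_inner_comm x'' (x t - z), real_inner_comm (x' t) (x t - z)]
  simp
  ring

lemma aux_D (z : H) (x x' : ℝ → H) (t : ℝ)
    (hx : HasDerivAt x (x' t) t) :
    HasDerivAt (fun t => ‖x t - z‖ ^ 2) (2 * ⟪x t - z, x' t⟫) t := 
  (hx.sub_const z).norm_sq

/-- derivative of the Lyapunov function -/
lemma aux_L (e b D : ℝ → ℝ) (e' b' D' t p l α θ : ℝ) (ht : 0 < t) (he : HasDerivAt e e' t)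
    (hb : HasDerivAt b b' t) (hD : HasDerivAt D D' t) :
    HasDerivAt (fun t => t ^ (2 * p) * (e t + l * b t / t
        + ((2 * l ^ 2 + l) / t ^ 2 - l * α * t ^ (-θ) / t) * D t / 2))
      (t ^ (2 * p) * ((2 * p / t) * (e t + l * b t / t
        + ((2 * l ^ 2 + l) / t ^ 2 - l * α * t ^ (-θ) / t) * D t / 2)
        + (e' + l * b' / t - l * b t / t ^ 2 + (-(2 * (2 * l ^ 2 + l)) / t ^ 3
          + l * α * (1 + θ) * t ^ (-θ) / t ^ 2) * D t / 2
          + ((2 * l ^ 2 + l) / t ^ 2 - l * α * t ^ (-θ) / t) * D' / 2))) t := by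
  have hid := hasDerivAt_id' t
  have h1 := hid.rpow_const (p := 2 * p) (Or.inl ht.ne')
  have h2 := hid.rpow_const (p := -θ) (Or.inl ht.ne')
  have h3 := (hasDerivAt_const t (2 * l ^ 2 + l)).div (hid.pow 2) (pow_ne_zero 2 ht.ne')
  have h4 := (h2.const_mul (l * α)).div hid ht.ne'
  refine (h1.mul ((he.add ((hb.const_mul l).div hid ht.ne')).add
    (((h3.sub h4).mul hD).div_const 2))).congr_deriv ?_
  rw [Real.rpow_sub_one ht.ne', Real.rpow_sub_one ht.ne']
  simp
  field_simp
  ring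

/-- the algebraic inequality -/
lemma aux_alg (W A b D Q P R t p l α θ τ γ r : ℝ) (ht : 0 < t) (hl : 0 < l) (hp : p = r + l)
    (hr : r = (1 + θ) / 2) (hr1 : r ≤ 1) (hpl : 2 * p = l * γ) (hQ : γ * W ≤ Q) (hD : 0 ≤ D)
    (hv : 0 ≤ A + 2 * l * b / t + l ^ 2 * D / t ^ 2) (hτ : (p + l) / t ≤ α * τ) :
    (2 * p / t) * ((W + A / 2) + l * b / t
        + ((2 * l ^ 2 + l) / t ^ 2 - l * α * τ / t) * D / 2)
        + ((-(α * τ) * A + P) + l * (A - α * τ * b - Q + R) / t - l * b / t ^ 2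
          + (-(2 * (2 * l ^ 2 + l)) / t ^ 3
          + l * α * (1 + θ) * τ / t ^ 2) * D / 2
          + ((2 * l ^ 2 + l) / t ^ 2 - l * α * τ / t) * (2 * b) / 2) ≤ P + l * R / t := by
  have h1 : 0 ≤ (α * τ - (p + l) / t) * (A + 2 * l * b / t + l ^ 2 * D / t ^ 2) :=
    mul_nonneg (sub_nonneg.2 hτ) hv
  have h2 : 0 ≤ l * (Q - γ * W) / t := by
    have := sub_nonneg.2 hQ
    positivity
  have h3 : 0 ≤ l * (1 + l) * (1 - r) * D / t ^ 3 := by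
    have := sub_nonneg.2 hr1
    positivity
  have hg : l * (Q - γ * W) / t = (l * Q - 2 * p * W) / t := by rw [hpl]; ring
  have hth : θ = 2 * r - 1 := by linarith
  rw [hg] at h2
  have : P + l * R / t - ((2 * p / t) * ((W + A / 2) + l * b / t
        + ((2 * l ^ 2 + l) / t ^ 2 - l * α * τ / t) * D / 2)
        + ((-(α * τ) * A + P) + l * (A - α * τ * b - Q + R) / t - l * b / t ^ 2
          + (-(2 * (2 * l ^ 2 + l)) / t ^ 3
          + l * α * (1 + θ) * τ / t ^ 2) * D / 2
          + ((2 * l ^ 2 + l) / t ^ 2 - l * α * τ / t) * (2 * b) / 2)) 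
      = (α * τ - (p + l) / t) * (A + 2 * l * b / t + l ^ 2 * D / t ^ 2)
        + (l * Q - 2 * p * W) / t + l * (1 + l) * (1 - r) * D / t ^ 3 := by
    rw [hth, hp]
    field_simp
    ring
  linarith

/-- derivative of the auxiliary function for convergence -/
lemma aux_V (b D : ℝ → ℝ) (b' t α θ : ℝ) (ht : 0 < t) 
    (hb : HasDerivAt b b' t) (hD : HasDerivAt D (2 * b t) t) :
    HasDerivAt (fun t => b t / t + D t / 2 / t ^ 2 + α * t ^ (-θ) * (D t / 2) / t)
      ((b' + α * t ^ (-θ) * b t) / t - D t / t ^ 3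
        - α * (1 + θ) * t ^ (-θ) * (D t / 2) / t ^ 2) t := by
  have hid := hasDerivAt_id' t
  have h2 := hid.rpow_const (p := -θ) (Or.inl ht.ne')
  refine (((hb.div hid ht.ne').add ((hD.div_const 2).div (hid.pow 2) (pow_ne_zero 2 ht.ne'))).add
    (((h2.const_mul α).mul (hD.div_const 2)).div hid ht.ne')).congr_deriv ?_
  rw [Real.rpow_sub_one ht.ne']
  simp
  field_simp
  ring

lemma aux_s (K c γ : ℝ) (hK : 0 < K) (hc : 0 < c) (hγ : 2 < γ) :
    ∃ C, 0 ≤ C ∧ ∀ s, 0 ≤ s → c * s ^ 2 ≤ K * s ^ γ + C := by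
  refine ⟨c * ((c / K) ^ (1 / (γ - 2))) ^ 2, by positivity, fun s hs => ?_⟩
  rcases le_total s ((c / K) ^ (1 / (γ - 2))) with h | h
  · have : c * s ^ 2 ≤ c * ((c / K) ^ (1 / (γ - 2))) ^ 2 := by gcongr
    have : 0 ≤ K * s ^ γ := by positivity
    linarith
  · have hs0 : 0 < s := lt_of_lt_of_le (by positivity) h
    have h1 : c / K ≤ s ^ (γ - 2) := by
      have := Real.rpow_le_rpow (by positivity) h (by linarith : 0 ≤ γ - 2)
      rwa [← Real.rpow_mul (by positivity), one_div_mul_cancel (by linarith), Real.rpow_one] at this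
    rw [div_le_iff₀ hK] at h1
    have h2 : s ^ γ = s ^ (γ - 2) * s ^ 2 := by
      rw [← Real.rpow_natCast, ← Real.rpow_add hs0]; norm_num
    have h3 := mul_le_mul_of_nonneg_right h1 (sq_nonneg s)
    have : 0 ≤ c * ((c / K) ^ (1 / (γ - 2))) ^ 2 := by positivity
    rw [h2]
    linarith


lemma aux_conv (e b D W Q P R n d gn G φ : ℝ → ℝ) (α θ T Gi : ℝ) (hα : 0 < α) (hθ : 0 ≤ θ)
    (hθ1 : θ ≤ 1) (hT : 1 ≤ T)
    (hG : ∀ t, T ≤ t → HasDerivAt G (φ t) t) (hGi : ∀ t, T ≤ t → G t ≤ Gi)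
    (hGl : Filter.Tendsto G Filter.atTop (nhds Gi))
    (hgφ : ∀ t, T ≤ t → gn t ≤ φ t) (hgn : ∀ t, 0 ≤ gn t)
    (hn : ∀ t, 0 ≤ n t) (hd : ∀ t, 0 ≤ d t) (hW : ∀ t, 0 ≤ W t)
    (hWQ : ∀ t, W t ≤ Q t)
    (heW : ∀ t, e t = W t + n t ^ 2 / 2) (hDd : ∀ t, D t = d t ^ 2)
    (hP : ∀ t, P t ≤ gn t * n t) (hR : ∀ t, R t ≤ gn t * d t) (hbn : ∀ t, -(d t * n t) ≤ b t)
    (he : ∀ t, T ≤ t → HasDerivAt e (-(α * t ^ (-θ)) * n t ^ 2 + P t) t)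
    (hb : ∀ t, T ≤ t → HasDerivAt b (n t ^ 2 - (α * t ^ (-θ)) * b t - Q t + R t) t)
    (hD : ∀ t, T ≤ t → HasDerivAt D (2 * b t) t)
    (hco : ∀ M, ∃ R0, ∀ t, W t ≤ M → d t ≤ R0) (ε : ℝ) (hε : 0 < ε) :
    ∃ T1, T ≤ T1 ∧ ∀ t, T1 ≤ t → e t ≤ ε := by
  have hφ : ∀ t, T ≤ t → 0 ≤ φ t := fun t ht => (hgn t).trans (hgφ t ht)
  have he0 : ∀ t, 0 ≤ e t := fun t => by rw [heW]; have := hW t; positivity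
  have hτ : ∀ t, T ≤ t → 1 / t ≤ t ^ (-θ) := fun t ht => by
    rw [one_div, ← Real.rpow_neg_one]
    exact Real.rpow_le_rpow_of_exponent_le (hT.trans ht) (by linarith)
  have hne : ∀ t, n t ≤ e t + 1 := fun t => by
    rw [heW]; nlinarith [hW t, sq_nonneg (n t - 1)]
  have hτ0 : ∀ t, T ≤ t → 0 ≤ t ^ (-θ) := fun t ht => 
    Real.rpow_nonneg (by linarith) _
  have hM : ∃ M, 0 ≤ M ∧ ∀ t, T ≤ t → e t + 1 ≤ M := by
    refine ⟨(e T + 1) * Real.exp (Gi - G T), by have := he0 T; positivity, fun t ht => ?_⟩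
    refine (aux_gronwall (fun t => e t + 1) _ G φ T (fun t ht => (he t ht).add_const 1) hG
      (fun t ht => ?_) t ht).trans ?_
    · have h1 : 0 ≤ (α * t ^ (-θ)) * n t ^ 2 := by have := hτ0 t ht; positivity
      have h2 : gn t * n t ≤ φ t * (e t + 1) :=
        mul_le_mul (hgφ t ht) (hne t) (hn t) (hφ t ht)
      linarith [hP t]
    · have := hGi t ht
      have := he0 T
      gcongr
  obtain ⟨N, hN0, hN⟩ := hM
  have hnN : ∀ t, T ≤ t → n t ≤ N := fun t ht => (hne t).trans (hN t ht)
  obtain ⟨R0, hR0⟩ := hco N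
  have hdR : ∀ t, T ≤ t → d t ≤ R0 := fun t ht => hR0 t (by
    have := hN t ht
    rw [heW] at this
    nlinarith [sq_nonneg (n t)])
  have hR00 : 0 ≤ R0 := (hd T).trans (hdR T le_rfl)
  have hPφ : ∀ t, T ≤ t → P t ≤ φ t * N := fun t ht =>
    (hP t).trans (mul_le_mul (hgφ t ht) (hnN t ht) (hn t) (hφ t ht))
  have hRφ : ∀ t, T ≤ t → R t ≤ φ t * R0 := fun t ht =>
    (hR t).trans (mul_le_mul (hgφ t ht) (hdR t ht) (hd t) (hφ t ht))
  have hanti := aux_anti (fun t => e t - N * G t) _ T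
    (fun t ht => (he t ht).sub ((hG t ht).const_mul N)) (fun t ht => by
      have h1 : 0 ≤ (α * t ^ (-θ)) * n t ^ 2 := by have := hτ0 t ht; positivity
      linarith [hPφ t ht])
  have hev : ∀ᶠ t in Filter.atTop, N * (Gi - G t) < ε / 2 := by
    have h1 : Filter.Tendsto (fun t => N * (Gi - G t)) Filter.atTop (nhds (N * (Gi - Gi))) :=
      (tendsto_const_nhds.sub hGl).const_mul N
    rw [sub_self, mul_zero] at h1
    exact h1.eventually (gt_mem_nhds (by positivity))
  obtain ⟨T0, hT0⟩ := Filter.eventually_atTop.1 hev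
  have hex : ∃ s, max T T0 ≤ s ∧ e s ≤ ε / 2 := by
    by_contra! hcon
    set T1 := max T T0 with hT1
    have hTT1 : T ≤ T1 := le_max_left _ _
    set C := R0 + 3 / (2 * α) * N with hC
    have hC0 : 0 ≤ C := by positivity
    have hU := aux_anti (fun t => (b t / t + D t / 2 / t ^ 2 + α * t ^ (-θ) * (D t / 2) / t)
        + 3 / (2 * α) * e t + ε / 2 * Real.log t - C * G t) _ T1
      (fun t ht => ((((aux_V b D _ t α θ (by linarith) (hb t (hTT1.trans ht))
        (hD t (hTT1.trans ht))).add ((he t (hTT1.trans ht)).const_mul _)).add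
        ((Real.hasDerivAt_log (by linarith)).const_mul _))).sub
        ((hG t (hTT1.trans ht)).const_mul C)) (fun t ht => by
        have htT := hTT1.trans ht
        have ht1 : 1 ≤ t := hT.trans htT
        have ht0 : 0 < t := by linarith
        have hD0 : 0 ≤ D t := by rw [hDd]; positivity
        have h1 : 0 ≤ D t / t ^ 3 := by positivity
        have h2 : 0 ≤ α * (1 + θ) * t ^ (-θ) * (D t / 2) / t ^ 2 := by
          have := hτ0 t htT
          positivity
        have h3 : (n t ^ 2 - (α * t ^ (-θ)) * b t - Q t + R t + α * t ^ (-θ) * b t) / t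
            ≤ (3 / 2 * n t ^ 2 - ε / 2) / t + φ t * R0 := by
          have h4 : n t ^ 2 - (α * t ^ (-θ)) * b t - Q t + R t + α * t ^ (-θ) * b t
            ≤ (3 / 2 * n t ^ 2 - ε / 2) + φ t * R0 := by
            have := hcon t ht
            rw [heW] at this
            linarith [hRφ t htT, hWQ t]
          calc _ ≤ ((3 / 2 * n t ^ 2 - ε / 2) + φ t * R0) / t := by gcongr
            _ = (3 / 2 * n t ^ 2 - ε / 2) / t + φ t * R0 / t := by ring
            _ ≤ _ := by
              have : φ t * R0 / t ≤ φ t * R0 :=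
                div_le_self (mul_nonneg (hφ t htT) hR00) ht1
              linarith
        have h5 : 3 / (2 * α) * (-(α * t ^ (-θ)) * n t ^ 2 + P t) ≤
            -(3 / 2 * n t ^ 2 * (1 / t)) + 3 / (2 * α) * (φ t * N) := by
          have h6 : 3 / (2 * α) * (-(α * t ^ (-θ)) * n t ^ 2 + P t) =
            -(3 / 2 * n t ^ 2 * t ^ (-θ)) + 3 / (2 * α) * P t := by field_simp
          rw [h6]
          have h7 := mul_le_mul_of_nonneg_left (hτ t htT) (by positivity : 0 ≤ 3 / 2 * n t ^ 2)
          have h8 := mul_le_mul_of_nonneg_left (hPφ t htT) (by positivity : 0 ≤ 3 / (2 * α))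
          linarith
        have h9 : (3 / 2 * n t ^ 2 - ε / 2) / t = 3 / 2 * n t ^ 2 * (1 / t) - ε / 2 * t⁻¹ := by
          field_simp
        rw [hC]
        linarith)
    obtain ⟨B, hB⟩ : ∃ B, ∀ t, T1 ≤ t → ε / 2 * Real.log t ≤ B := by
      refine ⟨((b T1 / T1 + D T1 / 2 / T1 ^ 2 + α * T1 ^ (-θ) * (D T1 / 2) / T1)
        + 3 / (2 * α) * e T1 + ε / 2 * Real.log T1 - C * G T1) + R0 * N + C * Gi,
        fun t ht => ?_⟩
      have h1 := hU T1 t le_rfl ht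
      have htT := hTT1.trans ht
      have ht1 : 1 ≤ t := hT.trans htT
      have ht0 : 0 < t := by linarith
      have hD0 : 0 ≤ D t := by rw [hDd]; positivity
      have h2 : 0 ≤ D t / 2 / t ^ 2 := by positivity
      have h3 : 0 ≤ α * t ^ (-θ) * (D t / 2) / t := by
        have := hτ0 t htT
        positivity
      have h4 : 0 ≤ 3 / (2 * α) * e t := by have := he0 t; positivity
      have h5 : C * G t ≤ C * Gi := mul_le_mul_of_nonneg_left (hGi t htT) hC0
      have h6 : -(R0 * N) ≤ b t / t := by
        rw [le_div_iff₀ ht0]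
        have h7 : d t * n t ≤ R0 * N := mul_le_mul (hdR t htT) (hnN t htT) (hn t) hR00
        have h8 : 0 ≤ R0 * N := by positivity
        nlinarith [hbn t]
      linarith
    have := hB (max T1 (Real.exp (2 * (B + 1) / ε))) (le_max_left _ _)
    have h2 : 2 * (B + 1) / ε ≤ Real.log (max T1 (Real.exp (2 * (B + 1) / ε))) := by
      rw [Real.le_log_iff_exp_le (lt_of_lt_of_le (Real.exp_pos _) (le_max_right _ _))]
      exact le_max_right _ _
    have h3 := mul_le_mul_of_nonneg_left h2 (by positivity : 0 ≤ ε / 2)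
    have h4 : ε / 2 * (2 * (B + 1) / ε) = B + 1 := by field_simp
    linarith
  obtain ⟨s, hs, hse⟩ := hex
  have hTs : T ≤ s := (le_max_left _ _).trans hs
  refine ⟨s, hTs, fun t ht => ?_⟩
  have h1 := hanti s t hTs ht
  have h2 := hT0 s ((le_max_right _ _).trans hs)
  have h3 := mul_le_mul_of_nonneg_left (hGi t (hTs.trans ht)) hN0
  linarith

lemma aux_rate (e b D W Q P R n d gn vn G φ : ℝ → ℝ) (α θ T Gi γ r p l K : ℝ) (hα : 0 < α)
    (hK : 0 < K) (hγ : 2 < γ) (hl : 0 < l) (hp : p = r + l)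
    (hr : r = (1 + θ) / 2) (hr1 : r ≤ 1) (hpl : 2 * p = l * γ)
    (hT : 1 ≤ T)
    (hG : ∀ t, T ≤ t → HasDerivAt G (φ t) t) (hGi : ∀ t, T ≤ t → G t ≤ Gi)
    (hφ : ∀ t, T ≤ t → φ t = t ^ p * gn t) (hgn : ∀ t, 0 ≤ gn t)
    (hd : ∀ t, 0 ≤ d t) 
    (hWQ : ∀ t, T ≤ t → γ * W t ≤ Q t) (hWK : ∀ t, T ≤ t → K * d t ^ γ ≤ W t)
    (heW : ∀ t, e t = W t + n t ^ 2 / 2) (hDd : ∀ t, D t = d t ^ 2)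
    (hvn : ∀ t, vn t ^ 2 = n t ^ 2 + 2 * l * b t / t + l ^ 2 * D t / t ^ 2)
    (hPR : ∀ t, T ≤ t → P t + l * R t / t ≤ gn t * vn t)
    (hnv : ∀ t, T ≤ t → n t ≤ vn t + l * d t / t)
    (hτ : ∀ t, T ≤ t → (p + l) / t ≤ α * t ^ (-θ))
    (he : ∀ t, T ≤ t → HasDerivAt e (-(α * t ^ (-θ)) * n t ^ 2 + P t) t)
    (hb : ∀ t, T ≤ t → HasDerivAt b (n t ^ 2 - (α * t ^ (-θ)) * b t - Q t + R t) t)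
    (hD : ∀ t, T ≤ t → HasDerivAt D (2 * b t) t) :
    ∃ C1 C2, ∀ t, T ≤ t → n t ≤ C1 * t ^ (-p) + C2 * t ^ (-l - 1) := by
  obtain ⟨C, hC0, hC⟩ := aux_s (K / 2) (l * α / 2) γ (by positivity) (by positivity) hγ
  set Y : ℝ → ℝ := (fun t => t ^ (2 * p) * (e t + l * b t / t
        + ((2 * l ^ 2 + l) / t ^ 2 - l * α * t ^ (-θ) / t) * D t / 2)) with hY
  have hs : ∀ t, T ≤ t → K * (t ^ l * d t) ^ γ ≤ t ^ (2 * p) * W t := fun t ht => by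
    have ht0 : 0 < t := by linarith
    rw [Real.mul_rpow (by positivity) (hd t), ← Real.rpow_mul ht0.le, ← hpl]
    have := mul_le_mul_of_nonneg_left (hWK t ht) (by positivity : 0 ≤ t ^ (2 * p))
    linarith
  have hZ : ∀ t, T ≤ t → t ^ (2 * p) * W t / 2 + (t ^ p * vn t) ^ 2 / 2 + 1 ≤ Y t + (C + 1) := by
    intro t ht
    have ht0 : 0 < t := by linarith
    have h1 := hC (t ^ l * d t) (mul_nonneg (by positivity) (hd t))
    have h2 := hs t ht
    have h3 : t ^ (2 * p) = (t ^ p) ^ 2 := by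
      rw [← Real.rpow_natCast, ← Real.rpow_mul ht0.le]; congr 1; push_cast; ring
    have h4 : t ^ (2 * p) * (t ^ (-θ) / t) = (t ^ l) ^ 2 := by
      rw [← Real.rpow_natCast, ← Real.rpow_mul ht0.le, ← Real.rpow_sub_one ht0.ne',
        ← Real.rpow_add ht0]; congr 1; push_cast; rw [hp, hr]; ring
    have h5 : Y t = t ^ (2 * p) * W t + (t ^ p * vn t) ^ 2 / 2
        + t ^ (2 * p) * ((l ^ 2 + l) / t ^ 2 * d t ^ 2 / 2) - l * α / 2 * (t ^ l * d t) ^ 2 := by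
      rw [mul_pow, mul_pow, ← h4, ← h3, hvn]
      simp only [hY, heW, hDd]
      ring
    have h6 : 0 ≤ t ^ (2 * p) * ((l ^ 2 + l) / t ^ 2 * d t ^ 2 / 2) := by positivity
    rw [h5]
    linarith
  have hW0 : ∀ t, T ≤ t → 0 ≤ t ^ (2 * p) * W t := fun t ht => by
    have ht0 : 0 < t := by linarith
    have := hd t
    exact le_trans (by positivity) (hs t ht)
  have hgr := aux_gronwall (fun t => Y t + (C + 1)) _ G φ T
    (fun t ht => (aux_L e b D _ _ _ t p l α θ (by linarith) (he t ht) (hb t ht)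
      (hD t ht)).add_const (C + 1)) hG (fun t ht => by
      have ht0 : 0 < t := by linarith
      have h1 := aux_alg (W t) (n t ^ 2) (b t) (D t) (Q t) (P t) (R t) t p l α θ (t ^ (-θ)) γ r
        ht0 hl hp hr hr1 hpl (hWQ t ht) (by rw [hDd]; positivity)
        (by rw [← hvn]; positivity) (hτ t ht)
      rw [← heW] at h1
      have h2 := mul_le_mul_of_nonneg_left (h1.trans (hPR t ht))
        (by positivity : 0 ≤ t ^ (2 * p))
      refine h2.trans ?_
      have h3 : t ^ (2 * p) = t ^ p * t ^ p := by
        rw [← Real.rpow_add ht0]; congr 1; ring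
      have h4 : t ^ p * vn t ≤ Y t + (C + 1) := by
        nlinarith [hZ t ht, hW0 t ht, sq_nonneg (t ^ p * vn t - 1)]
      have h5 : 0 ≤ φ t := by rw [hφ t ht]; have := hgn t; positivity
      have h6 := mul_le_mul_of_nonneg_left h4 h5
      refine le_trans (le_of_eq ?_) h6
      rw [h3, hφ t ht]; ring)
  obtain ⟨M, hM⟩ : ∃ M, ∀ t, T ≤ t → Y t + (C + 1) ≤ M := by
    refine ⟨(Y T + (C + 1)) * Real.exp (Gi - G T), fun t ht => (hgr t ht).trans ?_⟩
    have := hGi t ht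
    have : 0 ≤ Y T + (C + 1) := by
      have := hZ T le_rfl
      have := hW0 T le_rfl
      nlinarith [sq_nonneg (T ^ p * vn T)]
    gcongr
  refine ⟨M, l * (1 + 2 * M / K), fun t ht => (hnv t ht).trans ?_⟩
  have ht0 : 0 < t := by linarith
  have h1 := hZ t ht
  have h2 := hM t ht
  have h3 := hW0 t ht
  have h4 : vn t ≤ M * t ^ (-p) := by
    rw [Real.rpow_neg ht0.le, ← div_eq_mul_inv, le_div_iff₀ (by positivity)]
    nlinarith [sq_nonneg (t ^ p * vn t - 1)]
  have h5 : t ^ l * d t ≤ 1 + 2 * M / K := by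
    have hs0 : 0 ≤ t ^ l * d t := mul_nonneg (by positivity) (hd t)
    have h6 : (t ^ l * d t) ^ γ ≤ 2 * M / K := by
      rw [le_div_iff₀ hK]
      nlinarith [hs t ht, sq_nonneg (t ^ p * vn t)]
    rcases le_total (t ^ l * d t) 1 with h | h
    · have : 0 ≤ (t ^ l * d t) ^ γ := by positivity
      linarith
    · have := Real.rpow_le_rpow_of_exponent_le h (by linarith : 1 ≤ γ)
      rw [Real.rpow_one] at this
      linarith
  have h7 : l * d t / t ≤ l * (1 + 2 * M / K) * t ^ (-l - 1) := by
    rw [Real.rpow_sub_one ht0.ne', Real.rpow_neg ht0.le]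
    have h8 : d t ≤ (1 + 2 * M / K) * (t ^ l)⁻¹ := by
      rw [← div_eq_mul_inv, le_div_iff₀ (by positivity)]; linarith
    calc l * d t / t ≤ l * ((1 + 2 * M / K) * (t ^ l)⁻¹) / t := by gcongr
      _ = _ := by ring
  linarith

end helpers

theorem stmt_11
    {n : ℕ} (hn : 1 ≤ n)
    (F : EuclideanSpace ℝ (Fin n) → ℝ) (Fstar : ℝ)
    (Xstar : Set (EuclideanSpace ℝ (Fin n)))
    (hXstar : Xstar = {z | ∀ y, F z ≤ F y})
    (hne : Xstar.Nonempty)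
    (hFstar : ∀ z ∈ Xstar, F z = Fstar)
    (hconv : ConvexOn ℝ Set.univ F)
    (hdiff : Differentiable ℝ F)
    (α t₀ θ γ r : ℝ) (hα : 0 < α) (ht₀ : 0 < t₀) (hθ : 0 ≤ θ) (hθ1 : θ ≤ 1)
    (hγ : 2 < γ) (hr : r = (1 + θ) / 2)
    (g x x' x'' : ℝ → EuclideanSpace ℝ (Fin n))
    (hg : ContinuousOn g (Set.Ici t₀))
    (hx : ∀ t ∈ Set.Ici t₀, HasDerivAt x (x' t) t)
    (hx'd : ∀ t ∈ Set.Ici t₀, HasDerivAt x' (x'' t) t)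
    (hx''c : ContinuousOn x'' (Set.Ici t₀))
    (hode : ∀ t ∈ Set.Ici t₀, x'' t + (α / t ^ θ) • x' t + gradient F (x t) = g t)
    (hH1 : ∀ z ∈ Xstar, ∃ η > 0, ∀ y : EuclideanSpace ℝ (Fin n),
      ‖y - z‖ < η → F y - Fstar ≤ (1 / γ) * ⟪gradient F y, y - z⟫)
    (hH2 : ∀ z ∈ Xstar, ∃ K > 0, ∃ ε > 0, ∀ y : EuclideanSpace ℝ (Fin n),
      ‖y - z‖ < ε → K * Metric.infDist y Xstar ^ (γ : ℝ) ≤ F y - Fstar)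
    (huniq : ∃ z, Xstar = {z})
    (hint : IntegrableOn (fun t : ℝ => t ^ (r * γ / (γ - 2)) * ‖g t‖) (Set.Ici t₀))
    (hcase : (θ = 1 ∧ (γ + 2) / (γ - 2) ≤ α) ∨ θ < 1)
    (hexp : 1 < r * γ / (γ - 2)) :
    IntegrableOn (fun t : ℝ => ‖x' t‖) (Set.Ici t₀) := by
  obtain ⟨z, hz⟩ := huniq
  have hzX : z ∈ Xstar := by rw [hz]; rfl
  have hFz : F z = Fstar := hFstar z hzX
  have hmin : ∀ y, F z ≤ F y := by
    have := hzX
    rw [hXstar] at this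
    exact this
  obtain ⟨η, hη, hH1⟩ := hH1 z hzX
  obtain ⟨K, hK, ε, hε, hH2⟩ := hH2 z hzX
  have hinf : ∀ y, Metric.infDist y Xstar = ‖y - z‖ := fun y => by
    rw [hz, Metric.infDist_singleton, dist_eq_norm]
  simp only [hinf] at hH2
  set p := r * γ / (γ - 2) with hp
  set l := (1 + θ) / (γ - 2) with hl
  have hg2 : 0 < γ - 2 := by linarith
  have hl0 : 0 < l := by positivity
  have hpr : p = r + l := by rw [hp, hl, hr]; field_simp; ring
  have hpl : 2 * p = l * γ := by rw [hp, hl, hr]; field_simp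
  set φ : ℝ → ℝ := fun t => t ^ p * ‖g t‖ with hφ
  have hφc : ContinuousOn φ (Set.Ici t₀) := by
    refine ContinuousOn.mul (fun t ht => ?_) hg.norm
    exact (Real.continuousAt_rpow_const t p
      (Or.inl (ht₀.trans_le ht).ne')).continuousWithinAt
  set G : ℝ → ℝ := fun t => ∫ s in t₀..t, φ s with hGdef
  set Gi := ∫ s in Set.Ioi t₀, φ s with hGi
  set T := t₀ + 1 with hT
  have hT1 : 1 ≤ T := by linarith
  have hTt : ∀ t, T ≤ t → t ∈ Set.Ici t₀ := fun t ht => by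
    simp only [Set.mem_Ici]; linarith
  have hG : ∀ t, T ≤ t → HasDerivAt G (φ t) t := fun t ht => by
    have htt : t₀ < t := by linarith
    refine intervalIntegral.integral_hasDerivAt_right ?_ ?_ ?_
    · rw [intervalIntegrable_iff_integrableOn_Ioc_of_le htt.le]
      exact hint.mono_set (fun s hs => hs.1.le)
    · exact (hφc.mono Set.Ioi_subset_Ici_self).stronglyMeasurableAtFilter isOpen_Ioi t htt
    · exact hφc.continuousAt (Ici_mem_nhds htt)
  have hφ0 : ∀ t, T ≤ t → 0 ≤ φ t := fun t ht => by
    have : 0 < t := by linarith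
    positivity
  have hGl : Filter.Tendsto G Filter.atTop (nhds Gi) :=
    intervalIntegral_tendsto_integral_Ioi t₀ (hint.mono_set Set.Ioi_subset_Ici_self)
      Filter.tendsto_id
  have hGle : ∀ t, T ≤ t → G t ≤ Gi := fun t ht => by
    refine ge_of_tendsto hGl ?_
    filter_upwards [Filter.eventually_ge_atTop t] with s hs
    have := aux_anti (fun t => - G t) _ T (fun t ht => (hG t ht).neg)
      (fun t ht => neg_nonpos.2 (hφ0 t ht)) t s ht hs
    linarith
  have hode' : ∀ t, T ≤ t → x'' t + (α * t ^ (-θ)) • x' t + gradient F (x t) = g t :=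
    fun t ht => by
      rw [← hode t (hTt t ht), Real.rpow_neg (by linarith), div_eq_mul_inv]
  have he := fun t (ht : T ≤ t) => aux_E F hdiff Fstar x x' (x'' t) (g t) t (α * t ^ (-θ))
    (hx t (hTt t ht)) (hx'd t (hTt t ht)) (hode' t ht)
  have hb := fun t (ht : T ≤ t) => aux_b F z x x' (x'' t) (g t) t (α * t ^ (-θ))
    (hx t (hTt t ht)) (hx'd t (hTt t ht)) (hode' t ht)
  have hD := fun t (ht : T ≤ t) => aux_D z x x' t (hx t (hTt t ht))
  have hcoer : ∀ δ, 0 < δ → δ < ε → ∀ y, δ ≤ ‖y - z‖ →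
      K * δ ^ γ * ‖y - z‖ ≤ δ * (F y - F z) := fun δ hδ hδε y hy =>
    aux_coer F hconv z γ K δ hδ (fun y hy => by
      have := hH2 y (by rw [hy]; exact hδε)
      rwa [hy, ← hFz] at this) y hy
  have hconvg := aux_conv (fun t => (F (x t) - Fstar) + ‖x' t‖ ^ 2 / 2)
    (fun t => ⟪x t - z, x' t⟫) (fun t => ‖x t - z‖ ^ 2) (fun t => F (x t) - Fstar)
    (fun t => ⟪gradient F (x t), x t - z⟫) (fun t => ⟪g t, x' t⟫) (fun t => ⟪g t, x t - z⟫)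
    (fun t => ‖x' t‖) (fun t => ‖x t - z‖) (fun t => ‖g t‖) G φ α θ T Gi hα hθ hθ1 hT1 hG hGle hGl
    (fun t ht => le_mul_of_one_le_left (norm_nonneg _)
      (Real.one_le_rpow (hT1.trans ht) (by linarith)))
    (fun t => norm_nonneg _) (fun t => norm_nonneg _) (fun t => norm_nonneg _)
    (fun t => by rw [← hFz]; exact sub_nonneg.2 (hmin _))
    (fun t => by rw [← hFz]; exact aux_grad F hconv hdiff _ _)
    (fun t => rfl) (fun t => rfl) (fun t => real_inner_le_norm _ _)
    (fun t => real_inner_le_norm _ _)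
    (fun t => (abs_le.1 (abs_real_inner_le_norm _ _)).1) he hb hD
    (fun M => by
      refine ⟨max (ε / 2) (ε / 2 * M / (K * (ε / 2) ^ γ)), fun t ht => ?_⟩
      rcases le_total ‖x t - z‖ (ε / 2) with h | h
      · exact h.trans (le_max_left _ _)
      · refine le_trans ?_ (le_max_right _ _)
        rw [le_div_iff₀ (by positivity)]
        have h1 := hcoer (ε / 2) (by positivity) (by linarith) _ h
        have h2 : ε / 2 * (F (x t) - F z) ≤ ε / 2 * M := by
          rw [hFz]
          gcongr
        linarith)
  set δ := min η ε / 2 with hδ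
  have hmp : 0 < min η ε := lt_min hη hε
  have hδ0 : 0 < δ := by positivity
  have hδη : δ < η := by have := min_le_left η ε; linarith
  have hδε : δ < ε := by have := min_le_right η ε; linarith
  obtain ⟨T1, hTT1, hT1e⟩ := hconvg (K * δ ^ γ / 2) (by positivity)
  have hnear : ∀ t, T1 ≤ t → ‖x t - z‖ < δ := fun t ht => by
    by_contra! hcon
    have h1 := hcoer δ hδ0 hδε _ hcon
    have h2 : F (x t) - Fstar + ‖x' t‖ ^ 2 / 2 ≤ K * δ ^ γ / 2 := hT1e t ht
    have h3 : K * δ ^ γ * δ ≤ K * δ ^ γ * ‖x t - z‖ := by gcongr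
    have h4 : K * δ ^ γ ≤ F (x t) - F z := by
      by_contra! h5
      nlinarith
    have h6 : 0 < K * δ ^ γ := by positivity
    rw [hFz] at h4
    nlinarith [sq_nonneg ‖x' t‖]
  obtain ⟨T2, hT2⟩ : ∃ T2, ∀ t, T2 ≤ t → 0 < t → (p + l) / t ≤ α * t ^ (-θ) := by
    rcases hcase with ⟨h1, h2⟩ | h1
    · refine ⟨0, fun t _ ht => ?_⟩
      have : p + l = (γ + 2) / (γ - 2) := by rw [hp, hl, hr, h1]; field_simp; ring
      rw [this, h1, Real.rpow_neg_one, div_eq_mul_inv]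
      gcongr
    · have h2 : Filter.Tendsto (fun t : ℝ => α * t ^ (1 - θ)) Filter.atTop Filter.atTop :=
        (tendsto_rpow_atTop (by linarith)).const_mul_atTop hα
      obtain ⟨T2, hT2⟩ := Filter.eventually_atTop.1 (h2.eventually_ge_atTop (p + l))
      refine ⟨T2, fun t ht ht0 => ?_⟩
      rw [div_le_iff₀ ht0]
      have h3 := hT2 t ht
      rw [sub_eq_neg_add, Real.rpow_add_one ht0.ne'] at h3
      linarith
  set T3 := max T1 T2 with hT3
  have h31 : T1 ≤ T3 := le_max_left _ _
  have h32 : T2 ≤ T3 := le_max_right _ _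
  have hTT3 : T ≤ T3 := hTT1.trans h31
  have hrate := aux_rate (fun t => (F (x t) - Fstar) + ‖x' t‖ ^ 2 / 2)
    (fun t => ⟪x t - z, x' t⟫) (fun t => ‖x t - z‖ ^ 2) (fun t => F (x t) - Fstar)
    (fun t => ⟪gradient F (x t), x t - z⟫) (fun t => ⟪g t, x' t⟫) (fun t => ⟪g t, x t - z⟫)
    (fun t => ‖x' t‖) (fun t => ‖x t - z‖) (fun t => ‖g t‖)
    (fun t => ‖x' t + (l / t) • (x t - z)‖) G φ α θ T3 Gi γ r p l K hα hK hγ hl0 hpr hr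
    (by linarith) hpl (hT1.trans hTT3) (fun t ht => hG t (hTT3.trans ht))
    (fun t ht => hGle t (hTT3.trans ht)) (fun t _ => rfl) (fun t => norm_nonneg _)
    (fun t => norm_nonneg _)
    (fun t ht => by
      have h1 := hH1 (x t) ((hnear t (h31.trans ht)).trans hδη)
      have h2 : γ * (1 / γ * ⟪gradient F (x t), x t - z⟫) = ⟪gradient F (x t), x t - z⟫ := by
        field_simp
      rw [← h2]
      gcongr)
    (fun t ht => hH2 (x t) ((hnear t (h31.trans ht)).trans hδε))
    (fun t => rfl) (fun t => rfl)
    (fun t => by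
      rw [norm_add_sq_real, inner_smul_right, norm_smul, mul_pow, Real.norm_eq_abs, sq_abs,
        real_inner_comm]
      ring)
    (fun t ht => by
      refine le_trans (le_of_eq ?_) (real_inner_le_norm (g t) (x' t + (l / t) • (x t - z)))
      rw [inner_add_right, inner_smul_right]
      ring)
    (fun t ht => by
      have ht0 : 0 < t := by linarith
      have h1 : x' t = (x' t + (l / t) • (x t - z)) - (l / t) • (x t - z) := by abel
      have h2 := norm_sub_le (x' t + (l / t) • (x t - z)) ((l / t) • (x t - z))
      rw [← h1, norm_smul, Real.norm_of_nonneg (by positivity)] at h2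
      refine h2.trans (le_of_eq ?_)
      ring)
    (fun t ht => hT2 t (h32.trans ht) (by linarith))
    (fun t ht => he t (hTT3.trans ht)) (fun t ht => hb t (hTT3.trans ht))
    (fun t ht => hD t (hTT3.trans ht))
  obtain ⟨C1, C2, hC⟩ := hrate
  have hcont : ContinuousOn (fun t => ‖x' t‖) (Set.Ici t₀) := fun t ht =>
    (hx'd t ht).continuousAt.norm.continuousWithinAt
  have hT30 : 0 < T3 := by linarith
  have hsplit : Set.Ici t₀ = Set.Icc t₀ T3 ∪ Set.Ioi T3 :=
    (Set.Icc_union_Ioi_eq_Ici (by linarith)).symm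
  rw [hsplit]
  refine IntegrableOn.union ?_ ?_
  · exact (hcont.mono Set.Icc_subset_Ici_self).integrableOn_Icc
  · have h1 := (integrableOn_Ioi_rpow_of_lt (by linarith : -p < -1) hT30).const_mul C1
    have h2 := (integrableOn_Ioi_rpow_of_lt (by linarith : -l - 1 < -1) hT30).const_mul C2
    refine Integrable.mono' (h1.add h2) ?_ ?_
    · refine (hcont.mono ?_).aestronglyMeasurable measurableSet_Ioi
      intro t ht
      have : T3 < t := ht
      simp only [Set.mem_Ici]; linarith
    · refine (ae_restrict_iff' measurableSet_Ioi).2 (Filter.Eventually.of_forall fun t ht => ?_)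
      rw [norm_norm]
      exact hC t (le_of_lt ht)
end
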